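/- arXiv:2507.18434 — 8 statements merged into one kernel-verified Lean document; each statement's English description precedes it below -/
import Mathlib

section
/- Fix n ≥ 1 and a subset X = {x_1 < ⋯ < x_s} ⊆ [n]. For each subset S ⊆ [n] ∖ X write the union X ∪ S as an increasing chain X ∪ S = {x_{S,1} < ⋯ < x_{S,s+|S|}}. Then the number of permutations σ ∈ S_n with DT(σ) = X equals Σ_{S ⊆ [n]∖X} (−1)^{|S|} · (n − |X ∪ S|)! · ∏_{i=1}^{s+|S|} (x_{S,i} − i). -/
/-!
The proof is inclusion–exclusion on the descent top set. It rests on the count, for `T ⊆ [n]`,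
`#{σ ∈ S_n : T ⊆ DT σ} = (n - |T|)! · ∏ (t_i - i)` (`card_subset_DT`).

That count goes by induction on `n`. Every permutation of `[n + 1]` arises uniquely by inserting
the maximal value `n + 1` at one of `n + 1` places into a permutation `τ` of `[n]` (`insEquiv`).
A value `v ≤ n` is a descent top after the insertion iff it was one before and the new value
is not placed directly behind it; the value `n + 1` is a descent top iff it is not placed at the
end. So if the result is to have all of `T` as descent tops, then `τ` must have all of
`T \ {n + 1}`, and exactly `|T|` of the `n + 1` places are forbidden (`card_allowed`). The factor
`n + 1 - |T|` thus gained is the next factor of the factorial if `n + 1 ∉ T`, and the last factor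
`t_k - k` of the product if `n + 1 = t_k ∈ T`.
-/

/-- The descent top set of a permutation `σ` of `{0,…,n-1}`, recorded with one-based values:
`DT(σ) = {σ(i) : σ(i) > σ(i+1)} ⊆ {1,…,n}` (values shifted by `+1` to be one-based). -/
def DT {n : ℕ} (σ : Equiv.Perm (Fin n)) : Finset ℕ :=
  Finset.image (fun i => (σ i : ℕ) + 1)
    (Finset.univ.filter fun i : Fin n => ∃ j : Fin n, (j : ℕ) = (i : ℕ) + 1 ∧ σ j < σ i)

/-- For a finite set `T = {t_1 < ⋯ < t_k} ⊆ ℕ`, the product `∏_{i=1}^{k} (t_i − i)` (in `ℤ`). -/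
def chainProd (T : Finset ℕ) : ℤ :=
  ∏ i ∈ Finset.range T.card, (((T.sort (· ≤ ·)).getD i 0 : ℤ) - (i + 1))

/-! ### Inserting the maximal value -/

/-- The permutation whose word is that of `τ` with the new maximal value put at position `p`. -/
def ins {n : ℕ} (p : Fin (n + 1)) (τ : Equiv.Perm (Fin n)) : Equiv.Perm (Fin (n + 1)) :=
  ((finSuccEquiv' p).trans (Equiv.optionCongr τ)).trans finSuccEquivLast.symm

lemma ins_self {n : ℕ} (p : Fin (n + 1)) (τ : Equiv.Perm (Fin n)) :
    ins p τ p = Fin.last n := by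
  simp [ins]

lemma ins_succAbove {n : ℕ} (p : Fin (n + 1)) (τ : Equiv.Perm (Fin n)) (i : Fin n) :
    ins p τ (p.succAbove i) = (τ i).castSucc := by
  simp [ins]

lemma ins_injective {n : ℕ} :
    Function.Injective (fun q : Fin (n + 1) × Equiv.Perm (Fin n) => ins q.1 q.2) := by
  rintro ⟨p, τ⟩ ⟨q, ρ⟩ h
  have h : ins p τ = ins q ρ := h
  have hpq : p = q := by
    apply (ins p τ).injective
    rw [ins_self, h, ins_self]
  subst hpq
  congr 1
  ext i
  have := congrArg (fun f => f (p.succAbove i)) h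
  simp only [ins_succAbove] at this
  simpa using congrArg Fin.val this

/-- A permutation of `[n + 1]` is the same as a permutation of `[n]` with an insertion place. -/
noncomputable def insEquiv (n : ℕ) :
    Fin (n + 1) × Equiv.Perm (Fin n) ≃ Equiv.Perm (Fin (n + 1)) :=
  Equiv.ofBijective _ <| (Fintype.bijective_iff_injective_and_card _).2
    ⟨ins_injective, by simp [Fintype.card_perm, Nat.factorial_succ]⟩

lemma insEquiv_apply {n : ℕ} (p : Fin (n + 1)) (τ : Equiv.Perm (Fin n)) :
    insEquiv n (p, τ) = ins p τ := rfl

lemma mem_DT {n : ℕ} {σ : Equiv.Perm (Fin n)} {v : ℕ} :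
    v ∈ DT σ ↔ ∃ i j : Fin n, (j : ℕ) = i + 1 ∧ σ j < σ i ∧ (σ i : ℕ) + 1 = v := by
  simp only [DT, Finset.mem_image, Finset.mem_filter, Finset.mem_univ, true_and]
  constructor
  · rintro ⟨i, ⟨j, h1, h2⟩, h3⟩
    exact ⟨i, j, h1, h2, h3⟩
  · rintro ⟨i, j, h1, h2, h3⟩
    exact ⟨i, ⟨j, h1, h2⟩, h3⟩

lemma DT_subset {n : ℕ} (σ : Equiv.Perm (Fin n)) : DT σ ⊆ Finset.Icc 1 n := by
  intro v hv
  obtain ⟨i, j, _, _, rfl⟩ := mem_DT.1 hv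
  have := (σ i).isLt
  simp only [Finset.mem_Icc]
  omega

lemma val_succAbove {n : ℕ} (p : Fin (n + 1)) (i : Fin n) :
    (p.succAbove i : ℕ) = if (i : ℕ) < p then (i : ℕ) else i + 1 := by
  simp only [Fin.succAbove, Fin.lt_def, Fin.val_castSucc]
  split_ifs <;> simp

lemma last_mem_DT_ins {n : ℕ} (p : Fin (n + 1)) (τ : Equiv.Perm (Fin n)) :
    n + 1 ∈ DT (ins p τ) ↔ (p : ℕ) ≠ n := by
  rw [mem_DT]
  constructor
  · rintro ⟨i, j, h1, h2, h3⟩ hp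
    have : i = p := by
      apply (ins p τ).injective
      rw [ins_self]
      ext
      simpa using h3
    subst this
    omega
  · intro hp
    have hlt : (p : ℕ) + 1 < n + 1 := by omega
    refine ⟨p, ⟨p + 1, hlt⟩, rfl, ?_, by simp [ins_self]⟩
    rw [ins_self]
    refine lt_of_le_of_ne (Fin.le_last _) fun h => ?_
    rw [← ins_self p τ] at h
    have := congrArg Fin.val ((ins p τ).injective h)
    simp at this

lemma mem_DT_ins {n : ℕ} (p : Fin (n + 1)) (τ : Equiv.Perm (Fin n)) {v : ℕ} (hv : v ≤ n) :
    v ∈ DT (ins p τ) ↔ v ∈ DT τ ∧ ∀ i : Fin n, (τ i : ℕ) + 1 = v → (p : ℕ) ≠ i + 1 := by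
  simp only [mem_DT]
  constructor
  · rintro ⟨i, j, h1, h2, h3⟩
    have hip : i ≠ p := by
      rintro rfl
      rw [ins_self] at h3
      simp at h3
      omega
    have hjp : j ≠ p := by
      rintro rfl
      rw [ins_self] at h2
      exact absurd h2 (not_lt.2 (Fin.le_last _))
    obtain ⟨i, rfl⟩ := Fin.exists_succAbove_eq hip
    obtain ⟨j, rfl⟩ := Fin.exists_succAbove_eq hjp
    rw [ins_succAbove] at h3
    rw [ins_succAbove, ins_succAbove, Fin.castSucc_lt_castSucc_iff] at h2
    rw [val_succAbove, val_succAbove] at h1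
    simp only [Fin.val_castSucc] at h3
    refine ⟨⟨i, j, ?_, h2, h3⟩, ?_⟩
    · split_ifs at h1 <;> omega
    · intro k hk hpk
      have : k = i := by
        apply τ.injective
        ext
        omega
      subst this
      split_ifs at h1 <;> omega
  · rintro ⟨⟨i, j, h1, h2, h3⟩, h⟩
    have hp := h i h3
    refine ⟨p.succAbove i, p.succAbove j, ?_, ?_, ?_⟩
    · rw [val_succAbove, val_succAbove]
      split_ifs <;> omega
    · simpa [ins_succAbove] using h2
    · simpa [ins_succAbove] using h3

/-! ### The number of admissible places -/

/-- The places at which the insertion of `n + 1` into `τ` spoils a descent top from `T`: those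
directly behind an element of `T`, and the final place if `n + 1 ∈ T`. -/
def forbidden {n : ℕ} (τ : Equiv.Perm (Fin n)) (T : Finset ℕ) : Finset (Fin (n + 1)) :=
  (Finset.univ.filter fun i : Fin n => (τ i : ℕ) + 1 ∈ T).image Fin.succ ∪
    if n + 1 ∈ T then {Fin.last n} else ∅

lemma subset_DT_ins {n : ℕ} (p : Fin (n + 1)) (τ : Equiv.Perm (Fin n)) {T : Finset ℕ}
    (hT : T ⊆ Finset.Icc 1 (n + 1)) :
    T ⊆ DT (ins p τ) ↔ T.erase (n + 1) ⊆ DT τ ∧ p ∉ forbidden τ T := by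
  have hf : p ∉ forbidden τ T ↔
      (∀ i : Fin n, (τ i : ℕ) + 1 ∈ T → (p : ℕ) ≠ i + 1) ∧ (n + 1 ∈ T → (p : ℕ) ≠ n) := by
    unfold forbidden
    rw [Finset.mem_union, not_or]
    refine and_congr ?_ ?_
    · simp only [Finset.mem_image, Finset.mem_filter, Finset.mem_univ, true_and, not_exists,
        not_and, Fin.ext_iff, Fin.val_succ]
      exact forall₂_congr fun i _ => ne_comm
    · split_ifs with h <;> simp [h, Fin.ext_iff]
  rw [hf]
  constructor
  · intro h
    refine ⟨fun v hv => ?_, fun i hi => ?_, fun hn => (last_mem_DT_ins p τ).1 (h hn)⟩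
    · have hvT := Finset.mem_of_mem_erase hv
      have h1 := Finset.mem_Icc.1 (hT hvT)
      have h2 := Finset.ne_of_mem_erase hv
      exact ((mem_DT_ins p τ (by omega)).1 (h hvT)).1
    · exact ((mem_DT_ins p τ (τ i).isLt).1 (h hi)).2 i rfl
  · rintro ⟨h1, h2, h3⟩ v hv
    by_cases hvn : v = n + 1
    · subst hvn
      exact (last_mem_DT_ins p τ).2 (h3 hv)
    · have hI := Finset.mem_Icc.1 (hT hv)
      refine (mem_DT_ins p τ (by omega)).2
        ⟨h1 (Finset.mem_erase.2 ⟨hvn, hv⟩), fun i hi => h2 i (hi ▸ hv)⟩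

lemma card_forbidden {n : ℕ} (τ : Equiv.Perm (Fin n)) {T : Finset ℕ}
    (h : T.erase (n + 1) ⊆ DT τ) : (forbidden τ T).card = T.card := by
  unfold forbidden
  rw [Finset.card_union_of_disjoint, Finset.card_image_of_injective _ (Fin.succ_injective n)]
  · have h1 : (Finset.univ.filter fun i : Fin n => (τ i : ℕ) + 1 ∈ T).card
        = (T.erase (n + 1)).card := by
      refine Finset.card_bij (fun i _ => (τ i : ℕ) + 1) ?_ ?_ ?_
      · intro i hi
        have := (τ i).isLt
        exact Finset.mem_erase.2 ⟨by omega, (Finset.mem_filter.1 hi).2⟩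
      · intro i _ j _ hij
        apply τ.injective
        ext
        omega
      · intro v hv
        obtain ⟨i, _, _, _, hi⟩ := mem_DT.1 (h hv)
        exact ⟨i, by simpa [hi] using Finset.mem_of_mem_erase hv, hi⟩
    rw [h1]
    split_ifs with hn
    · rw [Finset.card_singleton, Finset.card_erase_add_one hn]
    · rw [Finset.card_empty, add_zero, Finset.erase_eq_of_notMem hn]
  · split_ifs with hn
    · -- A descent top never stands at the end, so the place behind it is not the final one.
      rw [Finset.disjoint_singleton_right]
      intro hmem
      obtain ⟨i, hi, hil⟩ := Finset.mem_image.1 hmem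
      have hlt := (τ i).isLt
      obtain ⟨k, j, h1, _, h3⟩ := mem_DT.1 (h (Finset.mem_erase.2
        ⟨(by omega : (τ i : ℕ) + 1 ≠ n + 1), (Finset.mem_filter.1 hi).2⟩))
      have : k = i := by
        apply τ.injective
        ext
        omega
      subst this
      have h4 := congrArg Fin.val hil
      simp at h4
      omega
    · exact Finset.disjoint_empty_right _

lemma card_allowed {n : ℕ} (τ : Equiv.Perm (Fin n)) {T : Finset ℕ}
    (h : T.erase (n + 1) ⊆ DT τ) :
    (Finset.univ.filter fun p : Fin (n + 1) => p ∉ forbidden τ T).card = n + 1 - T.card := by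
  have : (Finset.univ.filter fun p : Fin (n + 1) => p ∉ forbidden τ T) = (forbidden τ T)ᶜ := by
    ext
    simp
  rw [this, Finset.card_compl, Fintype.card_fin, card_forbidden τ h]

lemma card_subset_DT_succ {n : ℕ} {T : Finset ℕ} (hT : T ⊆ Finset.Icc 1 (n + 1)) :
    (Finset.univ.filter fun σ : Equiv.Perm (Fin (n + 1)) => T ⊆ DT σ).card
      = (Finset.univ.filter fun τ : Equiv.Perm (Fin n) => T.erase (n + 1) ⊆ DT τ).card
        * (n + 1 - T.card) := by
  simp only [Finset.card_filter]
  rw [← (insEquiv n).sum_comp, Fintype.sum_prod_type_right, Finset.sum_mul]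
  refine Finset.sum_congr rfl fun τ _ => ?_
  simp only [insEquiv_apply, subset_DT_ins _ _ hT]
  by_cases h : T.erase (n + 1) ⊆ DT τ
  · simp only [h, true_and, if_true, one_mul]
    rw [← Finset.card_filter, card_allowed τ h]
  · simp [h]

/-! ### The count with prescribed descent tops -/

lemma chainProd_insert {T : Finset ℕ} {m : ℕ} (h : ∀ t ∈ T, t < m) :
    chainProd (insert m T) = chainProd T * ((m : ℤ) - (T.card + 1)) := by
  have hm : m ∉ T := fun hm => lt_irrefl _ (h m hm)
  have hs : (insert m T).sort (· ≤ ·) = T.sort (· ≤ ·) ++ [m] := by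
    refine List.Perm.eq_of_pairwise (le := (· ≤ ·)) (fun a b _ _ h1 h2 => le_antisymm h1 h2)
      (Finset.pairwise_sort _ _) ?_ ?_
    · rw [List.pairwise_append]
      refine ⟨Finset.pairwise_sort _ _, List.pairwise_singleton _ _, fun a ha b hb => ?_⟩
      rw [List.mem_singleton] at hb
      subst hb
      exact (h a ((Finset.mem_sort _).1 ha)).le
    · rw [List.perm_ext_iff_of_nodup (Finset.sort_nodup _ _)]
      · intro a
        simp [or_comm]
      · rw [List.nodup_append]
        refine ⟨Finset.sort_nodup _ _, List.nodup_singleton _, fun a ha b hb => ?_⟩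
        rw [List.mem_singleton] at hb
        subst hb
        exact (h a ((Finset.mem_sort _).1 ha)).ne
  unfold chainProd
  rw [Finset.card_insert_of_notMem hm, Finset.prod_range_succ, hs]
  congr 1
  · refine Finset.prod_congr rfl fun i hi => ?_
    rw [List.getD_append _ _ _ _ (by simpa using hi)]
  · rw [List.getD_append_right _ _ _ _ (by simp)]
    simp

lemma card_subset_DT (n : ℕ) : ∀ T : Finset ℕ, T ⊆ Finset.Icc 1 n →
    ((Finset.univ.filter fun σ : Equiv.Perm (Fin n) => T ⊆ DT σ).card : ℤ)
      = (Nat.factorial (n - T.card) : ℤ) * chainProd T := by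
  induction n with
  | zero =>
    intro T hT
    have : T = ∅ := by simpa using hT
    subst this
    simp [chainProd]
  | succ n ih =>
    intro T hT
    have hsub : T.erase (n + 1) ⊆ Finset.Icc 1 n := by
      intro v hv
      have h1 := Finset.mem_Icc.1 (hT (Finset.mem_of_mem_erase hv))
      have h2 := Finset.ne_of_mem_erase hv
      exact Finset.mem_Icc.2 ⟨h1.1, by omega⟩
    have hc : (T.erase (n + 1)).card ≤ n := by simpa using Finset.card_le_card hsub
    rw [card_subset_DT_succ hT, Nat.cast_mul, ih _ hsub]
    by_cases hn : n + 1 ∈ T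
    · have hcard := Finset.card_erase_add_one hn
      have hch : chainProd T = chainProd (T.erase (n + 1))
          * (((n + 1 : ℕ) : ℤ) - ((T.erase (n + 1)).card + 1)) := by
        rw [← chainProd_insert, Finset.insert_erase hn]
        intro t ht
        have := Finset.mem_Icc.1 (hsub ht)
        omega
      rw [hch, ← hcard, Nat.cast_sub (by omega), Nat.add_sub_add_right]
      push_cast
      ring
    · rw [Finset.erase_eq_of_notMem hn] at hc ⊢
      rw [Nat.succ_sub hc, Nat.factorial_succ]
      push_cast
      ring

/-! ### Inclusion–exclusion -/

/-- The sign-weighted sum of `[X ∪ S ⊆ D]` over `S` is the indicator of `D = X`. -/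
lemma sum_indicator {n : ℕ} {X D : Finset ℕ} (hD : D ⊆ Finset.Icc 1 n) :
    ∑ S ∈ (Finset.Icc 1 n \ X).powerset, (-1 : ℤ) ^ S.card * (if X ∪ S ⊆ D then 1 else 0)
      = if D = X then 1 else 0 := by
  by_cases hX : X ⊆ D
  · have hfil : (Finset.Icc 1 n \ X).powerset.filter (fun S => X ∪ S ⊆ D)
        = (D \ X).powerset := by
      ext S
      simp only [Finset.mem_filter, Finset.mem_powerset, Finset.union_subset_iff,
        Finset.subset_sdiff]
      exact ⟨fun h => ⟨h.2.2, h.1.2⟩, fun h => ⟨⟨h.1.trans hD, h.2⟩, hX, h.1⟩⟩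
    simp only [mul_ite, mul_one, mul_zero]
    rw [← Finset.sum_filter, hfil, Finset.sum_powerset_neg_one_pow_card]
    refine if_congr ?_ rfl rfl
    rw [Finset.sdiff_eq_empty_iff_subset]
    exact ⟨fun h => h.antisymm hX, fun h => h.le⟩
  · rw [if_neg (by rintro rfl; exact hX subset_rfl)]
    refine Finset.sum_eq_zero fun S _ => ?_
    rw [if_neg (fun h => hX (Finset.union_subset_iff.1 h).1), mul_zero]

/-- for `n ≥ 1` and `X = {x_1 < ⋯ < x_s} ⊆ [n]`, the number of permutations
`σ ∈ S_n` with `DT(σ) = X` equals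
`Σ_{S ⊆ [n]∖X} (−1)^{|S|} · (n − |X ∪ S|)! · ∏_{i=1}^{s+|S|} (x_{S,i} − i)`,
where `X ∪ S = {x_{S,1} < ⋯ < x_{S,s+|S|}}`. -/
theorem stmt4 (n : ℕ) (hn : 1 ≤ n) (X : Finset ℕ) (hX : X ⊆ Finset.Icc 1 n) :
    ((Finset.univ.filter fun σ : Equiv.Perm (Fin n) => DT σ = X).card : ℤ)
      = ∑ S ∈ (Finset.Icc 1 n \ X).powerset,
          (-1 : ℤ) ^ S.card * (Nat.factorial (n - (X ∪ S).card) : ℤ) * chainProd (X ∪ S) := by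
  have key : ∀ S ∈ (Finset.Icc 1 n \ X).powerset,
      (-1 : ℤ) ^ S.card * (Nat.factorial (n - (X ∪ S).card) : ℤ) * chainProd (X ∪ S)
        = ∑ σ : Equiv.Perm (Fin n), (-1 : ℤ) ^ S.card * (if X ∪ S ⊆ DT σ then 1 else 0) := by
    intro S hS
    have hS' : S ⊆ Finset.Icc 1 n := (Finset.mem_powerset.1 hS).trans Finset.sdiff_subset
    rw [mul_assoc, ← card_subset_DT n _ (Finset.union_subset hX hS'), ← Finset.mul_sum,
      Finset.card_filter]
    push_cast
    rfl
  rw [Finset.sum_congr rfl key, Finset.sum_comm, Finset.card_filter]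
  push_cast
  exact Finset.sum_congr rfl fun σ _ => (sum_indicator (DT_subset σ)).symm
end

section
/- Fix n ≥ 1 and x_1 with 1 ≤ x_1 ≤ n+1. Then the number of permutations σ ∈ S_{n+1} with DT(σ) = {x_1} equals 2^{x_1 − 1} − 1. -/
/-- The indicator of the complement of `S ∪ {m}`: `0` on values of the first run, `1` on values of
the second run. -/
def runIndex {N : ℕ} (m : Fin N) (S : Finset (Fin N)) (v : Fin N) : ℕ :=
  if v ∈ insert m S then 0 else 1

/-- The permutation listing `S ∪ {m}` increasingly, followed by its complement increasingly. -/
def twoRuns {N : ℕ} (m : Fin N) (S : Finset (Fin N)) : Equiv.Perm (Fin N) :=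
  Tuple.sort (runIndex m S)

/-- Since values are distinct, `DT σ = {m + 1}` says that the position of `m` is the only descent
of `σ`. -/
lemma DT_eq_singleton_iff {N : ℕ} (σ : Equiv.Perm (Fin N)) (m : Fin N) :
    DT σ = {(m : ℕ) + 1} ↔
      ∀ i : Fin N, (∃ j : Fin N, (j : ℕ) = (i : ℕ) + 1 ∧ σ j < σ i) ↔ σ i = m := by
  have mem (k : Fin N) : (k : ℕ) + 1 ∈ DT σ ↔
      ∃ j : Fin N, (j : ℕ) = (σ.symm k : ℕ) + 1 ∧ σ j < k := by
    simp only [DT, Finset.mem_image, Finset.mem_filter, Finset.mem_univ, true_and]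
    constructor
    · rintro ⟨i, ⟨j, hj, hlt⟩, hi⟩
      have hik : σ i = k := Fin.ext (by omega)
      subst hik
      exact ⟨j, by simpa using hj, hlt⟩
    · rintro ⟨j, hj, hlt⟩
      exact ⟨σ.symm k, ⟨j, hj, by simpa using hlt⟩, by simp⟩
  constructor
  · intro h i
    have := mem (σ i)
    rw [h] at this
    simp only [Finset.mem_singleton, Equiv.symm_apply_apply] at this
    rw [← this, Fin.ext_iff]
    omega
  · intro h
    ext a
    rw [Finset.mem_singleton]
    constructor
    · intro ha
      obtain ⟨i, hi, rfl⟩ := Finset.mem_image.1 ha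
      rw [(h i).1 (by simpa using hi)]
    · rintro rfl
      rw [mem]
      simpa using (h (σ.symm m)).2 (by simp)

lemma twoRuns_spec {N : ℕ} (m : Fin N) (S : Finset (Fin N)) :
    (∀ i j, i ≤ j → runIndex m S (twoRuns m S i) ≤ runIndex m S (twoRuns m S j)) ∧
    ∀ i j, i < j → runIndex m S (twoRuns m S i) = runIndex m S (twoRuns m S j) →
      twoRuns m S i < twoRuns m S j := by
  have h := (Tuple.eq_sort_iff (f := runIndex m S) (σ := twoRuns m S)).1 rfl
  exact ⟨fun i j hij => h.1 hij, h.2⟩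

/-- `S` is recovered from its two-run permutation as the set of values standing before `m`. -/
lemma mem_iff_before {N : ℕ} (m : Fin N) (S : Finset (Fin N)) (hS : ∀ v ∈ S, v < m) (v : Fin N) :
    v ∈ S ↔ (twoRuns m S).symm v < (twoRuns m S).symm m := by
  obtain ⟨h1, h2⟩ := twoRuns_spec m S
  constructor
  · intro hv
    by_contra! hle
    have hne : (twoRuns m S).symm m ≠ (twoRuns m S).symm v := by
      simpa using (hS v hv).ne'
    have := h2 _ _ (lt_of_le_of_ne hle hne) (by simp [runIndex, hv])
    simp only [Equiv.apply_symm_apply] at this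
    exact absurd this (hS v hv).not_gt
  · intro hlt
    have := h1 _ _ hlt.le
    have hne : v ≠ m := by rintro rfl; exact lt_irrefl _ hlt
    by_contra hv
    simp [runIndex, hv, hne] at this

lemma DT_twoRuns {N : ℕ} (m : Fin N) (S : Finset (Fin N)) (hS : ∀ v ∈ S, v < m)
    (w : Fin N) (hw : w < m) (hwS : w ∉ S) : DT (twoRuns m S) = {(m : ℕ) + 1} := by
  rw [DT_eq_singleton_iff]
  obtain ⟨h1, h2⟩ := twoRuns_spec m S
  set σ := twoRuns m S
  have r0 (v : Fin N) : runIndex m S v = 0 ↔ v = m ∨ v ∈ S := by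
    simp [runIndex, or_iff_not_imp_left]
  have r1 (v : Fin N) : runIndex m S v ≤ 1 := by unfold runIndex; split_ifs <;> simp
  obtain ⟨p, hp⟩ := σ.surjective m
  obtain ⟨q, hq⟩ := σ.surjective w
  have rp : runIndex m S (σ p) = 0 := (r0 _).2 (Or.inl hp)
  have rq : runIndex m S (σ q) = 1 := by
    have : runIndex m S (σ q) ≠ 0 := by rw [Ne, r0, hq]; simp [hwS, hw.ne]
    have := r1 (σ q)
    omega
  intro i
  constructor
  · rintro ⟨j, hj, hlt⟩
    have hij : i < j := Fin.lt_def.2 (by omega)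
    have hne : runIndex m S (σ i) ≠ runIndex m S (σ j) := fun h => (h2 i j hij h).not_gt hlt
    have hle := h1 i j hij.le
    have hj1 := r1 (σ j)
    have ri : runIndex m S (σ i) = 0 := by omega
    -- `m` lies in the first run and is its maximum, so the last entry of that run is `m`.
    have hpj : p < j := by
      by_contra! hjp
      have := h1 j p hjp
      omega
    have hpi : p ≤ i := by rw [Fin.lt_def] at hpj; rw [Fin.le_def]; omega
    rcases hpi.eq_or_lt with h | h
    · rw [← h, hp]
    · have hmi := h2 p i h (by omega)
      rw [hp] at hmi
      rcases (r0 _).1 ri with h' | h'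
      · exact h'
      · exact absurd (hS _ h') hmi.not_gt
  · intro him
    have hip : i = p := σ.injective (him.trans hp.symm)
    subst hip
    have hiq : i < q := by
      by_contra! hqi
      have := h1 q i hqi
      omega
    have hiq' := Fin.lt_def.1 hiq
    refine ⟨⟨i + 1, by omega⟩, rfl, ?_⟩
    set j : Fin N := ⟨i + 1, by omega⟩ with hjdef
    have hij : i < j := Fin.lt_def.2 (by simp [hjdef])
    have hjq : j ≤ q := Fin.le_def.2 (by simpa [hjdef] using hiq')
    rcases hjq.eq_or_lt with h | h
    · rw [h, hq, hp]; exact hw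
    · by_contra! hge
      have hne : σ i ≠ σ j := fun h => hij.ne (σ.injective h)
      -- An entry above `m` belongs to the second run, which is increasing up to `w < m`.
      have rj : runIndex m S (σ j) = 1 := by
        have h0 : runIndex m S (σ j) ≠ 0 := by
          intro h0
          rcases (r0 _).1 h0 with h' | h'
          · exact hne (hp.trans h'.symm)
          · exact absurd (hS _ h') (by rw [← hp]; exact hge.not_gt)
        have := r1 (σ j)
        omega
      have := h2 j q h (by omega)
      rw [hq] at this
      rw [hp] at hge
      exact absurd (hge.trans_lt this) hw.not_gt

/-- A permutation whose only descent is at position `p` increases between any two positions on the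
same side of the cut after `p`. -/
lemma lt_of_same_side {N : ℕ} (σ : Equiv.Perm (Fin N)) (p : Fin N)
    (h : ∀ i : Fin N, (∃ j : Fin N, (j : ℕ) = (i : ℕ) + 1 ∧ σ j < σ i) → i = p)
    (i j : Fin N) (hij : i < j) (hside : j ≤ p ∨ p < i) : σ i < σ j := by
  obtain ⟨j, hj⟩ := j
  induction j with
  | zero => simp [Fin.lt_def] at hij
  | succ k ih =>
    rw [Fin.lt_def] at hij
    have hk : k < N := by omega
    have step : σ ⟨k, hk⟩ < σ ⟨k + 1, hj⟩ := by
      by_contra! hle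
      have hne : σ ⟨k + 1, hj⟩ ≠ σ ⟨k, hk⟩ := by simp
      have := h ⟨k, hk⟩ ⟨⟨k + 1, hj⟩, rfl, lt_of_le_of_ne hle hne⟩
      simp only [Fin.lt_def, Fin.le_def, Fin.ext_iff] at *
      omega
    rcases Nat.lt_or_ge i k with hik | hik
    · refine (ih hk (Fin.lt_def.2 hik) ?_).trans step
      simp only [Fin.lt_def, Fin.le_def] at *
      omega
    · have : i = ⟨k, hk⟩ := Fin.ext (by simp at hij ⊢; omega)
      rw [this]
      exact step

lemma exists_eq_twoRuns {N : ℕ} (m : Fin N) (σ : Equiv.Perm (Fin N))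
    (h : DT σ = {(m : ℕ) + 1}) :
    ∃ S : Finset (Fin N), (∀ v ∈ S, v < m) ∧ (∃ w < m, w ∉ S) ∧ twoRuns m S = σ := by
  rw [DT_eq_singleton_iff] at h
  obtain ⟨p, hp⟩ := σ.surjective m
  have inc := lt_of_same_side σ p fun i hi => σ.injective (((h i).1 hi).trans hp.symm)
  have r0 (i : Fin N) : runIndex m (Finset.univ.filter fun v => σ.symm v < p) (σ i)
      = if i ≤ p then 0 else 1 := by
    have : σ i = m ↔ i = p := by rw [← hp]; exact σ.injective.eq_iff
    simp [runIndex, this, le_iff_eq_or_lt]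
  refine ⟨Finset.univ.filter fun v => σ.symm v < p, ?_, ?_, ?_⟩
  · intro v hv
    have := inc _ p (by simpa using hv) (Or.inl le_rfl)
    simpa [hp] using this
  · obtain ⟨j, hj, hlt⟩ := (h p).2 hp
    refine ⟨σ j, hp ▸ hlt, ?_⟩
    simp only [Finset.mem_filter, Finset.mem_univ, true_and, Equiv.symm_apply_apply, Fin.lt_def]
    omega
  · refine (Tuple.eq_sort_iff.2 ⟨?_, ?_⟩).symm
    · intro i j hij
      simp only [Function.comp, r0]
      split_ifs with h1 h2
      · exact le_rfl
      · exact Nat.zero_le _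
      · exact absurd (hij.trans ‹_›) h1
      · exact le_rfl
    · intro i j hij heq
      rw [r0, r0] at heq
      refine inc i j hij ?_
      by_cases hjp : j ≤ p
      · exact Or.inl hjp
      · right
        by_contra hip
        simp [hjp, not_lt.1 hip] at heq

/-- for `n ≥ 1` and `1 ≤ x_1 ≤ n+1`, the number of permutations `σ ∈ S_{n+1}`
with `DT(σ) = {x_1}` equals `2^{x_1 − 1} − 1`. -/
theorem stmt6 (n : ℕ) (hn : 1 ≤ n) (x₁ : ℕ) (hx1 : 1 ≤ x₁) (hx2 : x₁ ≤ n + 1) :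
    ((Finset.univ.filter fun σ : Equiv.Perm (Fin (n + 1)) => DT σ = {x₁}).card : ℤ)
      = 2 ^ (x₁ - 1) - 1 := by
  obtain ⟨m, hm⟩ : ∃ m : Fin (n + 1), (m : ℕ) + 1 = x₁ :=
    ⟨⟨x₁ - 1, by omega⟩, by simp; omega⟩
  subst hm
  have below {S : Finset (Fin (n + 1))} (hS : S ∈ (Finset.Iio m).ssubsets) :
      (∀ v ∈ S, v < m) ∧ ∃ w < m, w ∉ S := by
    obtain ⟨h1, h2⟩ := Finset.ssubset_iff_exists_subset_erase.1 (Finset.mem_ssubsets.1 hS)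
    exact ⟨fun v hv => Finset.mem_Iio.1 ((Finset.mem_ssubsets.1 hS).1 hv),
      h1, Finset.mem_Iio.1 h2.1, fun hh => by simpa using h2.2 hh⟩
  have key : (Finset.Iio m).ssubsets.card =
      (Finset.univ.filter fun σ : Equiv.Perm (Fin (n + 1)) => DT σ = {(m : ℕ) + 1}).card := by
    refine Finset.card_bij (fun S _ => twoRuns m S) ?_ ?_ ?_
    · intro S hS
      obtain ⟨h1, w, hw, hwS⟩ := below hS
      simpa using DT_twoRuns m S h1 w hw hwS
    · intro S hS T hT hST
      ext v
      rw [mem_iff_before m S (below hS).1, mem_iff_before m T (below hT).1, hST]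
    · intro σ hσ
      obtain ⟨S, h1, ⟨w, hw, hwS⟩, h3⟩ := exists_eq_twoRuns m σ (by simpa using hσ)
      refine ⟨S, Finset.mem_ssubsets.2 ⟨fun v hv => Finset.mem_Iio.2 (h1 v hv), ?_⟩, h3⟩
      exact fun hsub => hwS (hsub (Finset.mem_Iio.2 hw))
  rw [← key, Finset.ssubsets, Finset.card_erase_of_mem (Finset.mem_powerset_self _),
    Finset.card_powerset, Fin.card_Iio, Nat.cast_sub Nat.one_le_two_pow]
  simp
end

section
/- Fix n ≥ 1 and x_1 < x_2 with 1 ≤ x_1 < x_2 ≤ n+1. Then the number of permutations σ ∈ S_{n+1} with DT(σ) = {x_1, x_2} equals 3^{x_1 − 1}·2^{x_2 − x_1} − (2^{x_1 − 1} + 2^{x_2 − 1}) + 1. -/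
/-- Every descent top of the list `l` lies in `S`. -/
def TopsIn (S : Finset ℕ) (l : List ℕ) : Prop :=
  l.IsChain fun a b => b < a → a ∈ S

instance (S : Finset ℕ) (l : List ℕ) : Decidable (TopsIn S l) := by
  unfold TopsIn; infer_instance

/-- The number of arrangements of the entries of `l` whose descent tops all lie in `S`. -/
def cnt (S : Finset ℕ) (l : List ℕ) : ℕ :=
  l.permutations'.countP fun u => decide (TopsIn S u)

lemma topsIn_cons_cons (S : Finset ℕ) (a b : ℕ) (l : List ℕ) :
    TopsIn S (a :: b :: l) ↔ (b < a → a ∈ S) ∧ TopsIn S (b :: l) := by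
  simp [TopsIn]

lemma topsIn_min_cons (S : Finset ℕ) (t : ℕ) (l : List ℕ) (h : ∀ a ∈ l, t < a) :
    TopsIn S (t :: l) ↔ TopsIn S l := by
  cases l with
  | nil => simp [TopsIn]
  | cons b l =>
    rw [topsIn_cons_cons]
    have := h b (by simp)
    constructor
    · exact fun h => h.2
    · exact fun h => ⟨fun h' => by omega, h⟩

/-- Insertions of `t` into `ys` counted behind a fixed first entry `y`. Keeping `y` in front makes
the induction work: only the insertion right after `y` tests whether `y ∈ S`. -/
lemma countP_insert_aux (S : Finset ℕ) (t : ℕ) (ys : List ℕ) : ∀ y, t < y → (∀ a ∈ ys, t < a) →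
    (List.permutations'Aux t ys).countP (fun w => decide (TopsIn S (y :: w))) =
      if TopsIn S (y :: ys) then (y :: ys).countP (fun a => decide (a ∈ S)) else 0 := by
  induction ys with
  | nil =>
    intro y hy _
    by_cases h : y ∈ S <;> simp [TopsIn, h, hy]
  | cons z zs ih =>
    intro y hy h
    have hz := h z (by simp)
    have ih' := ih z hz (fun a ha => h a (by simp [ha]))
    have hmin := topsIn_min_cons S t (z :: zs) h
    rw [List.permutations'Aux, List.countP_cons, List.countP_map]
    have e : (List.permutations'Aux t zs).countP
        ((fun w => decide (TopsIn S (y :: w))) ∘ List.cons z) =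
        if z < y → y ∈ S then (List.permutations'Aux t zs).countP
          (fun w => decide (TopsIn S (z :: w))) else 0 := by
      split_ifs with c
      · apply List.countP_congr
        intro w _
        simp only [Function.comp, topsIn_cons_cons, decide_eq_true_eq]
        exact and_iff_right c
      · rw [List.countP_eq_zero]
        intro w _
        simp only [Function.comp, topsIn_cons_cons, c]
        simp
    rw [e, ih', List.countP_cons (a := y)]
    simp only [topsIn_cons_cons S y t, hmin, topsIn_cons_cons S y z]
    by_cases h1 : TopsIn S (z :: zs) <;> by_cases h2 : y ∈ S <;> by_cases h3 : z < y <;>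
      simp [h1, h2, h3, hy]

/-- A new minimum can be inserted into an admissible word in front, or right after an entry
of `S`. -/
lemma countP_insert (S : Finset ℕ) (t : ℕ) (u : List ℕ) (h : ∀ a ∈ u, t < a) :
    (List.permutations'Aux t u).countP (fun w => decide (TopsIn S w)) =
      if TopsIn S u then 1 + u.countP (fun a => decide (a ∈ S)) else 0 := by
  cases u with
  | nil => simp [TopsIn]
  | cons y ys =>
    rw [List.permutations'Aux, List.countP_cons, List.countP_map]
    have := countP_insert_aux S t ys y (h y (by simp)) (fun a ha => h a (by simp [ha]))
    simp only [Function.comp_def]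
    rw [this]
    simp only [topsIn_min_cons S t _ h]
    by_cases h1 : TopsIn S (y :: ys) <;> simp [h1, add_comm]

lemma cnt_cons (S : Finset ℕ) (t : ℕ) (ts : List ℕ) (h : ∀ a ∈ ts, t < a) :
    cnt S (t :: ts) = (1 + ts.countP (fun a => decide (a ∈ S))) * cnt S ts := by
  have key : ∀ L : List (List ℕ), (∀ u ∈ L, u.Perm ts) →
      (L.flatMap (List.permutations'Aux t)).countP (fun u => decide (TopsIn S u)) =
      (1 + ts.countP (fun a => decide (a ∈ S))) * L.countP (fun u => decide (TopsIn S u)) := by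
    intro L
    induction L with
    | nil => simp
    | cons u L ih =>
      intro hL
      have hu := hL u (by simp)
      rw [List.flatMap_cons, List.countP_append, ih (fun v hv => hL v (by simp [hv])),
        countP_insert S t u (fun a ha => h a (hu.mem_iff.1 ha)), hu.countP_eq, List.countP_cons]
      by_cases h1 : TopsIn S u <;> simp [h1]
      ring
  exact key _ (fun u hu => List.mem_permutations'.1 hu)

lemma cnt_range' (S : Finset ℕ) (k m : ℕ) :
    cnt S (List.range' k (m + 1)) =
      (1 + (S.filter fun a => k < a ∧ a ≤ k + m).card) * cnt S (List.range' (k + 1) m) := by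
  rw [List.range'_succ, cnt_cons _ _ _ (by intro a ha; simp [List.mem_range'_1] at ha; omega)]
  congr 2
  rw [List.countP_eq_length_filter, ← List.toFinset_card_of_nodup
    (List.Nodup.filter _ List.nodup_range')]
  congr 1
  ext a
  simp [List.mem_range'_1]
  constructor
  · rintro ⟨h, h'⟩; exact ⟨h', by omega, by omega⟩
  · rintro ⟨h, h'⟩; exact ⟨by omega, h⟩

lemma cnt_empty (m : ℕ) : ∀ k, cnt ∅ (List.range' k m) = 1 := by
  induction m with
  | zero => intro k; simp [cnt, TopsIn]
  | succ m ih => intro k; rw [cnt_range', ih]; simp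

lemma cnt_one (x : ℕ) (m : ℕ) : ∀ k, x < k + m → cnt {x} (List.range' k m) = 2 ^ (x - k) := by
  induction m with
  | zero => intro k hk; simp [cnt, TopsIn, show x - k = 0 by omega]
  | succ m ih =>
    intro k hk
    rw [cnt_range', ih _ (by omega), Finset.filter_singleton]
    by_cases h : k < x
    · rw [if_pos ⟨h, by omega⟩, show x - k = x - (k + 1) + 1 by omega, pow_succ]
      simp; ring
    · rw [if_neg (by omega), show x - k = 0 by omega, show x - (k + 1) = 0 by omega]
      simp

/-- Truncated subtraction makes the formula valid for every start `k`: there are `x - k` entries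
of factor `3` and, from `max k x` on, `y - max k x` entries of factor `2`. -/
lemma cnt_two (x y : ℕ) (hxy : x < y) (m : ℕ) : ∀ k, y < k + m →
    cnt {x, y} (List.range' k m) = 3 ^ (x - k) * 2 ^ (y - max k x) := by
  induction m with
  | zero => intro k hk; simp [cnt, TopsIn, show x - k = 0 by omega, show y - max k x = 0 by omega]
  | succ m ih =>
    intro k hk
    rw [cnt_range', ih _ (by omega), Finset.filter_insert, Finset.filter_singleton]
    by_cases h : k < x
    · rw [if_pos ⟨h, by omega⟩, if_pos ⟨by omega, by omega⟩, Finset.card_pair hxy.ne,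
        show x - k = x - (k + 1) + 1 by omega, pow_succ,
        show max (k + 1) x = max k x by omega]
      ring
    · rw [if_neg (by omega), show x - k = 0 by omega, show x - (k + 1) = 0 by omega]
      by_cases h' : k < y
      · rw [if_pos ⟨h', by omega⟩, show y - max k x = y - max (k + 1) x + 1 by omega, pow_succ]
        simp; ring
      · rw [if_neg (by omega), show y - max k x = 0 by omega, show y - max (k + 1) x = 0 by omega]
        simp

/-- The one-line notation of `σ`, with one-based values. -/
def word {n : ℕ} (σ : Equiv.Perm (Fin n)) : List ℕ := List.ofFn fun i => (σ i : ℕ) + 1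

lemma topsIn_word {n : ℕ} (S : Finset ℕ) (σ : Equiv.Perm (Fin n)) :
    TopsIn S (word σ) ↔ DT σ ⊆ S := by
  unfold TopsIn word DT
  rw [List.isChain_iff_getElem, Finset.image_subset_iff]
  simp only [List.getElem_ofFn, List.length_ofFn, Finset.mem_filter, Finset.mem_univ, true_and]
  constructor
  · rintro h i ⟨j, hj, hlt⟩
    have := h i (by omega)
    have e : (⟨i + 1, by omega⟩ : Fin n) = j := Fin.ext hj.symm
    rw [e] at this
    exact this (by simpa using hlt)
  · intro h i hi hlt
    exact h ⟨i, by omega⟩ ⟨⟨i + 1, hi⟩, rfl, by simpa using hlt⟩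

lemma word_injective {n : ℕ} : Function.Injective (word (n := n)) := by
  intro σ τ h
  have := List.ofFn_injective h
  ext i
  simpa using congrFun this i

/-- The words of permutations are exactly the arrangements of `1, …, n`; surjectivity follows from
both sides having `n!` elements. -/
lemma image_word (n : ℕ) : (Finset.univ : Finset (Equiv.Perm (Fin n))).image word =
    (List.range' 1 n).permutations'.toFinset := by
  apply Finset.eq_of_subset_of_card_le
  · intro l hl
    obtain ⟨σ, -, rfl⟩ := Finset.mem_image.1 hl
    rw [List.mem_toFinset, List.mem_permutations']
    apply (List.perm_ext_iff_of_nodup _ List.nodup_range').2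
    · intro a
      simp only [word, List.mem_ofFn, List.mem_range'_1]
      constructor
      · rintro ⟨i, rfl⟩; have := (σ i).2; omega
      · rintro ⟨h, h'⟩; exact ⟨σ.symm ⟨a - 1, by omega⟩, by simp; omega⟩
    · rw [word, List.nodup_ofFn]
      intro i j h
      simpa [Fin.ext_iff.symm] using h
  · rw [Finset.card_image_of_injective _ word_injective]
    refine (List.toFinset_card_le _).trans ?_
    rw [← (List.permutations_perm_permutations' _).length_eq, List.length_permutations]
    simp [Fintype.card_perm]

lemma card_subset (n : ℕ) (S : Finset ℕ) :
    (Finset.univ.filter fun σ : Equiv.Perm (Fin n) => DT σ ⊆ S).card =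
      cnt S (List.range' 1 n) := by
  rw [cnt, List.countP_eq_length_filter, ← List.toFinset_card_of_nodup
    (((List.permutations_perm_permutations' _).nodup (List.nodup_permutations _ List.nodup_range')).filter _),
    List.toFinset_filter, ← image_word, Finset.filter_image,
    Finset.card_image_of_injective _ word_injective]
  simp [topsIn_word]

/-- for `n ≥ 1` and `1 ≤ x_1 < x_2 ≤ n+1`, the number of permutations
`σ ∈ S_{n+1}` with `DT(σ) = {x_1, x_2}` equals
`3^{x_1−1}·2^{x_2−x_1} − (2^{x_1−1} + 2^{x_2−1}) + 1`. -/
theorem stmt7 (n : ℕ) (hn : 1 ≤ n) (x₁ x₂ : ℕ) (h1 : 1 ≤ x₁) (h12 : x₁ < x₂)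
    (h2 : x₂ ≤ n + 1) :
    ((Finset.univ.filter fun σ : Equiv.Perm (Fin (n + 1)) =>
        DT σ = ({x₁, x₂} : Finset ℕ)).card : ℤ)
      = 3 ^ (x₁ - 1) * 2 ^ (x₂ - x₁) - (2 ^ (x₁ - 1) + 2 ^ (x₂ - 1)) + 1 := by
  have c12 := card_subset (n + 1) {x₁, x₂}
  have c1 := card_subset (n + 1) {x₁}
  have c2 := card_subset (n + 1) {x₂}
  have c0 := card_subset (n + 1) ∅
  rw [cnt_two _ _ h12 _ _ (by omega), max_eq_right h1] at c12
  rw [cnt_one _ _ _ (by omega)] at c1 c2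
  rw [cnt_empty] at c0
  suffices h : ((Finset.univ.filter fun σ : Equiv.Perm (Fin (n + 1)) =>
        DT σ = ({x₁, x₂} : Finset ℕ)).card : ℤ) =
      ((Finset.univ.filter fun σ : Equiv.Perm (Fin (n + 1)) => DT σ ⊆ {x₁, x₂}).card : ℤ) -
      (((Finset.univ.filter fun σ : Equiv.Perm (Fin (n + 1)) => DT σ ⊆ {x₁}).card : ℤ) +
       ((Finset.univ.filter fun σ : Equiv.Perm (Fin (n + 1)) => DT σ ⊆ {x₂}).card : ℤ)) +
      ((Finset.univ.filter fun σ : Equiv.Perm (Fin (n + 1)) => DT σ ⊆ ∅).card : ℤ) by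
    rw [h, c12, c1, c2, c0]
    push_cast
    rfl
  simp only [Finset.card_filter]
  push_cast
  rw [← Finset.sum_add_distrib, ← Finset.sum_sub_distrib, ← Finset.sum_add_distrib]
  refine Finset.sum_congr rfl fun σ _ => ?_
  generalize DT σ = T
  have e2 : T ⊆ {x₁, x₂} ↔ T = ∅ ∨ T = {x₁} ∨ T = {x₂} ∨ T = {x₁, x₂} := by
    rw [← Finset.coe_subset]
    simp only [← Finset.coe_inj, Finset.coe_insert, Finset.coe_singleton, Finset.coe_empty]
    exact Set.subset_pair_iff_eq
  simp only [e2]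
  simp only [Finset.subset_singleton_iff, Finset.subset_empty]
  have n1 : ({x₁} : Finset ℕ) ≠ {x₂} := by simpa using h12.ne
  have n2 : ({x₁} : Finset ℕ) ≠ {x₁, x₂} := by
    intro h; have := congrArg Finset.card h; simp [Finset.card_pair h12.ne] at this
  have n3 : ({x₂} : Finset ℕ) ≠ {x₁, x₂} := by
    intro h; have := congrArg Finset.card h; simp [Finset.card_pair h12.ne] at this
  have n4 : (∅ : Finset ℕ) ≠ {x₁, x₂} := by
    intro h; have := congrArg Finset.card h; simp [Finset.card_pair h12.ne] at this
  by_cases t0 : T = ∅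
  · subst t0; simp [n4]
  by_cases t1 : T = {x₁}
  · subst t1; simp [n1, n2]
  by_cases t2 : T = {x₂}
  · subst t2; simp [n1.symm, n3]
  simp [t0, t1, t2]
end

section
/- For every n ≥ 0, the multivariate homogeneous Eulerian polynomial A^h_n ∈ ℝ[x_1,…,x_n,y_1,…,y_n] is homogeneous of degree n and real stable: A^h_n(z_1,…,z_n,w_1,…,w_n) ≠ 0 for all z, w ∈ ℂ^n with Im(z_i) > 0 and Im(w_i) > 0 for all i ∈ [n]. -/
/-!
Homogeneity is immediate from the recursion, the only subtlety being that the truncated degree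
`n - 1` of a partial derivative is harmless because the sum of derivatives is empty for `n = 0`.

Stability goes by induction. Write `P = A^h_n` and `D` for the sum of the partial derivatives over
the variables already introduced. At a point `z` of the open upper half-space,
`A^h_{n+1}(z) = x y P(z) (1/x + 1/y + (D P)(z) / P(z))`, where `x, y` are the two new coordinates
of `z` and `P(z) ≠ 0` by induction. Here `(D P)(z) / P(z)` is the logarithmic derivative at `t = 0`
of the univariate polynomial `q(t) = P(z + t e)`, with `e` the indicator vector of the variables
occurring in `D`. By stability of `P` every root `r` of `q` has `Im r < 0`, so each summand of
`q'(0) / q(0) = ∑ 1 / (0 - r)` has negative imaginary part. As `1/x` and `1/y` also have negative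
imaginary part, the bracket does not vanish.
-/


open MvPolynomial

/-- The multivariate homogeneous Eulerian polynomials `A^h_n ∈ ℝ[x_1,…,x_n,y_1,…,y_n]`,
with `x_{i+1}` encoded as `X (Sum.inl i)` and `y_{i+1}` as `X (Sum.inr i)`:
`A^h_0 = 1` and
`A^h_n = (x_n + y_n)·A^h_{n−1} + x_n·y_n·Σ_{i=1}^{n−1}(∂A^h_{n−1}/∂x_i + ∂A^h_{n−1}/∂y_i)`. -/
noncomputable def eulerianMv : ℕ → MvPolynomial (ℕ ⊕ ℕ) ℝ
  | 0 => 1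
  | n + 1 =>
      (X (Sum.inl n) + X (Sum.inr n)) * eulerianMv n
        + X (Sum.inl n) * X (Sum.inr n) *
            ∑ i ∈ Finset.range n,
              (pderiv (Sum.inl i) (eulerianMv n) + pderiv (Sum.inr i) (eulerianMv n))

/-- The restriction `t ↦ p(z + t e_S)` of `p` to the line through `z` whose direction is the
indicator vector of `S`, as a univariate complex polynomial. -/
noncomputable def lineRestrict {σ : Type*} [DecidableEq σ] (S : Finset σ) (z : σ → ℂ)
    (p : MvPolynomial σ ℝ) : Polynomial ℂ :=
  aeval (fun i => Polynomial.C (z i) + if i ∈ S then Polynomial.X else 0) p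

lemma eval_lineRestrict {σ : Type*} [DecidableEq σ] (S : Finset σ) (z : σ → ℂ)
    (p : MvPolynomial σ ℝ) (t : ℂ) :
    (lineRestrict S z p).eval t = aeval (fun i => z i + if i ∈ S then t else 0) p := by
  unfold lineRestrict
  induction p using MvPolynomial.induction_on with
  | C a => simp [Polynomial.algebraMap_apply]
  | add p q hp hq => simp only [map_add, Polynomial.eval_add, hp, hq]
  | mul_X p i hp =>
    simp only [map_mul, aeval_X, Polynomial.eval_mul, hp, Polynomial.eval_add, Polynomial.eval_C]
    split_ifs <;> simp

lemma derivative_lineRestrict {σ : Type*} [DecidableEq σ] (S : Finset σ) (z : σ → ℂ)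
    (p : MvPolynomial σ ℝ) :
    Polynomial.derivative (lineRestrict S z p) = lineRestrict S z (∑ i ∈ S, pderiv i p) := by
  unfold lineRestrict
  induction p using MvPolynomial.induction_on with
  | C a => simp [Polynomial.algebraMap_apply]
  | add p q hp hq => simp only [map_add, hp, hq, Finset.sum_add_distrib]
  | mul_X p i hp =>
    simp only [map_mul, aeval_X, Polynomial.derivative_mul, hp, Derivation.leibniz, smul_eq_mul,
      Finset.sum_add_distrib, map_add, pderiv_X, Pi.single_apply, map_sum,
      Finset.sum_mul, Polynomial.derivative_C, zero_add]
    rw [add_comm]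
    refine congrArg₂ (· + ·) ?_ ?_
    · split_ifs with h <;> simp [h]
    · exact Finset.sum_congr rfl fun j _ => mul_comm _ _

lemma im_inv_neg {w : ℂ} (hw : 0 < w.im) : (w⁻¹).im < 0 := by
  have hw0 : w ≠ 0 := by rintro rfl; simp at hw
  rw [Complex.inv_im]
  exact div_neg_of_neg_of_pos (neg_neg_of_pos hw) (Complex.normSq_pos.2 hw0)

/-- If all roots of `q` lie in the open lower half-plane, its logarithmic derivative at `0` has
nonpositive imaginary part. -/
lemma im_logDeriv_nonpos {q : Polynomial ℂ} (hq : ∀ t : ℂ, 0 ≤ t.im → q.eval t ≠ 0) :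
    ((Polynomial.derivative q).eval 0 / q.eval 0).im ≤ 0 := by
  rw [(IsAlgClosed.splits q).eval_derivative_div_eval_of_ne_zero (hq 0 le_rfl),
    ← Complex.imCLM_apply, map_multiset_sum]
  refine (Multiset.sum_le_card_nsmul _ 0 fun y hy => ?_).trans_eq (smul_zero _)
  simp only [Multiset.map_map, Multiset.mem_map, Function.comp_apply, Complex.imCLM_apply] at hy
  obtain ⟨r, hr, rfl⟩ := hy
  have hr' : r.im < 0 := by
    by_contra! h
    exact hq r h (Polynomial.isRoot_of_mem_roots hr)
  simp only [one_div]
  exact (im_inv_neg (by simpa using hr')).le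

/-- The operator `p ↦ (x + y) p + x y ∑_{i ∈ S} ∂p/∂z_i` preserves stability. The values of `x` and
`y` are arbitrary points of the upper half-plane, possibly coordinates of `z`. -/
lemma stable_step {σ : Type*} [DecidableEq σ] (S : Finset σ) (p : MvPolynomial σ ℝ)
    (hp : ∀ z : σ → ℂ, (∀ i, 0 < (z i).im) → aeval z p ≠ 0)
    (z : σ → ℂ) (hz : ∀ i, 0 < (z i).im) {x y : ℂ} (hx : 0 < x.im) (hy : 0 < y.im) :
    (x + y) * aeval z p + x * y * aeval z (∑ i ∈ S, pderiv i p) ≠ 0 := by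
  have hx0 : x ≠ 0 := by rintro rfl; simp at hx
  have hy0 : y ≠ 0 := by rintro rfl; simp at hy
  have h0 (f : MvPolynomial σ ℝ) : (lineRestrict S z f).eval 0 = aeval z f := by
    simp [eval_lineRestrict]
  have hlog := im_logDeriv_nonpos (q := lineRestrict S z p) fun t ht => by
    rw [eval_lineRestrict]
    refine hp _ fun i => ?_
    have := hz i
    split_ifs
    · rw [Complex.add_im]; linarith
    · simpa using this
  rw [derivative_lineRestrict, h0, h0] at hlog
  have hP := hp z hz
  have hfac : (x + y) * aeval z p + x * y * aeval z (∑ i ∈ S, pderiv i p)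
      = x * y * aeval z p * (x⁻¹ + y⁻¹ + aeval z (∑ i ∈ S, pderiv i p) / aeval z p) := by
    field_simp
    ring
  rw [hfac]
  refine mul_ne_zero (mul_ne_zero (mul_ne_zero hx0 hy0) hP) fun h => ?_
  have him := congrArg Complex.im h
  simp only [Complex.add_im, Complex.zero_im] at him
  linarith [im_inv_neg hx, im_inv_neg hy]

lemma eulerianMv_isHomogeneous (n : ℕ) : (eulerianMv n).IsHomogeneous n := by
  induction n with
  | zero => exact isHomogeneous_one _ _
  | succ n ih =>
    rw [eulerianMv]
    refine IsHomogeneous.add ?_ ?_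
    · rw [add_comm n 1]
      exact ((isHomogeneous_X _ _).add (isHomogeneous_X _ _)).mul ih
    · rcases Nat.eq_zero_or_pos n with rfl | hn
      · simpa using isHomogeneous_zero _ _ _
      · have hdeg : n + 1 = 1 + 1 + (n - 1) := by omega
        rw [hdeg]
        exact ((isHomogeneous_X _ _).mul (isHomogeneous_X _ _)).mul
          (IsHomogeneous.sum _ _ _ fun i _ => ih.pderiv.add ih.pderiv)

/-- for every `n ≥ 0`, `A^h_n` is homogeneous of degree `n` and real stable:
it does not vanish on any point all of whose coordinates have strictly positive
imaginary part. -/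
theorem stmt11 (n : ℕ) :
    (eulerianMv n).IsHomogeneous n ∧
    ∀ z : ℕ ⊕ ℕ → ℂ, (∀ i, 0 < (z i).im) → MvPolynomial.aeval z (eulerianMv n) ≠ 0 := by
  refine ⟨eulerianMv_isHomogeneous n, ?_⟩
  induction n with
  | zero => simp [eulerianMv]
  | succ n ih =>
    intro z hz
    have h := stable_step ((Finset.range n).disjSum (Finset.range n)) (eulerianMv n) ih z hz
      (hz (Sum.inl n)) (hz (Sum.inr n))
    rw [Finset.sum_disjSum, ← Finset.sum_add_distrib] at h
    simpa only [eulerianMv, map_add, map_mul, aeval_X] using h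
end

section
/- For every n ≥ 0, the dehomogenized multivariate Eulerian polynomial A_n(x_1,…,x_n) := A^h_n(x_1,…,x_n,1,…,1) ∈ ℝ[x_1,…,x_n] is a real zero polynomial: A_n(0) = 1 ≠ 0, and for every a ∈ ℝ^n and every λ ∈ ℂ, A_n(λa) = 0 implies λ ∈ ℝ. -/
/-!
The homogeneous Eulerian polynomial `p_n = A^h_n(x, y)` satisfies a form of stability that allows
real `x`: it does not vanish when all `Im x_i ≥ 0` and all `Im y_i > 0`
(`eulerianMv_ne_zero`). This goes by induction on `n`. If `x_n = 0`, then `p_n = y_n p_{n-1}`.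
Otherwise `p_n / (x_n y_n) = (1/x_n + 1/y_n) p_{n-1} + D p_{n-1}`, where `D` is the derivative in the
all-ones direction and `1/x_n + 1/y_n` lies in the open lower half-plane, so it suffices that
`Im (D p_{n-1} / p_{n-1}) ≤ 0`. That quotient is the logarithmic derivative at `0` of
`q(s) = p_{n-1}(x + s, y + s)`, which by induction has no root with `Im s ≥ 0`; writing
`q'(0)/q(0) = ∑ 1/(0 - r)` over the roots `r` of `q` gives the sign
(`im_logDeriv_nonpos`).

Since `p_n` is homogeneous of degree `n`, `A_n(λ a) = p_n(λ a, 1) = μ^n p_n(± a, 1/μ)` with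
`μ = ± λ`. For nonreal `λ` the sign can be chosen such that `Im (1/μ) > 0`, whence `A_n(λ a) ≠ 0`.
-/

open MvPolynomial

/-- The dehomogenized multivariate Eulerian polynomial
`A_n(x_1,…,x_n) = A^h_n(x_1,…,x_n,1,…,1) ∈ ℝ[x_1,…,x_n]`. -/
noncomputable def eulerianMvDehom (n : ℕ) : MvPolynomial ℕ ℝ :=
  MvPolynomial.aeval (Sum.elim (fun i => MvPolynomial.X i) fun _ => 1) (eulerianMv n)

/-- If all roots of `q` lie in the open lower half-plane, then its logarithmic derivative at `0`
lies in the closed lower half-plane. -/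
lemma im_logDeriv_nonpos_s12 (q : Polynomial ℂ) (h : ∀ s : ℂ, 0 ≤ s.im → q.eval s ≠ 0) :
    (q.derivative.eval 0 / q.eval 0).im ≤ 0 := by
  rw [(IsAlgClosed.splits q).eval_derivative_div_eval_of_ne_zero (h 0 (by simp))]
  change Complex.imAddGroupHom _ ≤ 0
  rw [map_multiset_sum, Multiset.map_map]
  refine (Multiset.sum_le_card_nsmul _ 0 ?_).trans_eq (smul_zero _)
  intro y hy
  obtain ⟨r, hr, rfl⟩ := Multiset.mem_map.1 hy
  have hr0 : q.eval r = 0 := (Polynomial.mem_roots'.1 hr).2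
  have him : r.im < 0 := by
    by_contra hcon
    exact h r (not_lt.1 hcon) hr0
  simp only [Function.comp, zero_sub, one_div, Complex.coe_imAddGroupHom, Complex.inv_im,
    Complex.neg_im, neg_neg]
  exact div_nonpos_of_nonpos_of_nonneg him.le (Complex.normSq_nonneg _)

/-- The substitution `x_i ↦ x_i + s`, `y_i ↦ y_i + s` for `i < n`, with the remaining variables
unshifted, where `s` is the indeterminate of `ℂ[s]`. -/
noncomputable def shiftPoint (n : ℕ) (z : ℕ ⊕ ℕ → ℂ) (j : ℕ ⊕ ℕ) : Polynomial ℂ :=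
  Polynomial.C (z j) + if Sum.elim id id j < n then Polynomial.X else 0

lemma derivative_aeval_shiftPoint (n : ℕ) (z : ℕ ⊕ ℕ → ℂ) (p : MvPolynomial (ℕ ⊕ ℕ) ℝ) :
    Polynomial.derivative (aeval (shiftPoint n z) p) =
      aeval (shiftPoint n z) (∑ i ∈ Finset.range n,
        (pderiv (Sum.inl i) p + pderiv (Sum.inr i) p)) := by
  induction p using MvPolynomial.induction_on with
  | C a =>
    simp [IsScalarTower.algebraMap_apply ℝ ℂ (Polynomial ℂ)]
  | add p q hp hq =>
    rw [map_add, map_add, hp, hq, ← map_add, ← Finset.sum_add_distrib]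
    congr 1
    refine Finset.sum_congr rfl fun i _ => ?_
    simp only [map_add]
    ring
  | mul_X p j hp =>
    have hsum : ∑ i ∈ Finset.range n,
        (pderiv (Sum.inl i) (p * X j) + pderiv (Sum.inr i) (p * X j)) =
        (∑ i ∈ Finset.range n, (pderiv (Sum.inl i) p + pderiv (Sum.inr i) p)) * X j +
        p * ∑ i ∈ Finset.range n, (pderiv (Sum.inl i) (X j) + pderiv (Sum.inr i) (X j)) := by
      rw [Finset.sum_mul, Finset.mul_sum, ← Finset.sum_add_distrib]
      refine Finset.sum_congr rfl fun i _ => ?_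
      simp only [pderiv_mul]
      ring
    rw [hsum, map_mul, Polynomial.derivative_mul, hp, map_add, map_mul, map_mul, aeval_X]
    congr 2
    rcases j with j | j <;> by_cases hj : j < n <;>
      simp [shiftPoint, pderiv_X, Pi.single_apply, hj]

lemma eval_aeval_shiftPoint (n : ℕ) (z : ℕ ⊕ ℕ → ℂ) (p : MvPolynomial (ℕ ⊕ ℕ) ℝ) (s : ℂ) :
    (aeval (shiftPoint n z) p).eval s =
      aeval (fun j => z j + if Sum.elim id id j < n then s else 0) p := by
  have h := (MvPolynomial.comp_aeval_apply (shiftPoint n z)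
    ((Polynomial.aeval s : Polynomial ℂ →ₐ[ℂ] ℂ).restrictScalars ℝ) p)
  simp only [AlgHom.restrictScalars_apply, Polynomial.coe_aeval_eq_eval] at h
  rw [h]
  congr 2
  funext j
  by_cases hj : Sum.elim id id j < n <;> simp [shiftPoint, hj]

/-- Stability of `A^h_n`, strengthened to allow real values of the `x_i`. -/
lemma eulerianMv_ne_zero (n : ℕ) : ∀ z : ℕ ⊕ ℕ → ℂ, (∀ i, 0 ≤ (z (Sum.inl i)).im) →
    (∀ i, 0 < (z (Sum.inr i)).im) → aeval z (eulerianMv n) ≠ 0 := by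
  induction n with
  | zero => intro z _ _; simp [eulerianMv]
  | succ n ih =>
    intro z hx hy
    have hp := ih z hx hy
    have hshift := im_logDeriv_nonpos_s12 (aeval (shiftPoint n z) (eulerianMv n)) (by
      intro s hs
      rw [eval_aeval_shiftPoint]
      apply ih
      · intro i
        have := hx i
        by_cases hi : i < n <;> simp [hi] <;> linarith
      · intro i
        have := hy i
        by_cases hi : i < n <;> simp [hi] <;> linarith)
    rw [derivative_aeval_shiftPoint, eval_aeval_shiftPoint, eval_aeval_shiftPoint] at hshift
    simp only [ite_self, add_zero] at hshift
    rw [eulerianMv]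
    simp only [map_add (aeval z) (_ * _), map_mul, aeval_X, map_add (aeval z) (X _)]
    set P := aeval z (eulerianMv n)
    set Q := aeval z (∑ i ∈ Finset.range n,
      (pderiv (Sum.inl i) (eulerianMv n) + pderiv (Sum.inr i) (eulerianMv n)))
    have hx' := hx n
    have hy' := hy n
    set x := z (Sum.inl n)
    set y := z (Sum.inr n)
    have hy0 : y ≠ 0 := by
      rintro h
      simp [h] at hy'
    intro h0
    by_cases hx0 : x = 0
    · simp [hx0, hy0, hp] at h0
    · have hQ : Q / P = -(x⁻¹ + y⁻¹) := by
        field_simp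
        linear_combination h0
      rw [hQ] at hshift
      simp only [Complex.neg_im, Complex.add_im, Complex.inv_im] at hshift
      have h1 : 0 ≤ x.im / Complex.normSq x := div_nonneg hx' (Complex.normSq_nonneg _)
      have h2 : 0 < y.im / Complex.normSq y := div_pos hy' (Complex.normSq_pos.2 hy0)
      rw [neg_div, neg_div] at hshift
      linarith

lemma aeval_mul_of_isHomogeneous {σ : Type*} {p : MvPolynomial σ ℝ} {n : ℕ}
    (hp : p.IsHomogeneous n) (c : ℂ) (z : σ → ℂ) :
    aeval (fun j => c * z j) p = c ^ n * aeval z p := by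
  rw [aeval_def, aeval_def, eval₂_eq, eval₂_eq, Finset.mul_sum]
  refine Finset.sum_congr rfl fun d hd => ?_
  have hdeg : ∑ i ∈ d.support, d i = n := by
    rw [← Finsupp.degree_apply, Finsupp.degree_eq_weight_one]
    exact hp (mem_support_iff.1 hd)
  simp only [mul_pow, Finset.prod_mul_distrib, Finset.prod_pow_eq_pow_sum, hdeg]
  ring

lemma aeval_eulerianMvDehom {S : Type*} [CommRing S] [Algebra ℝ S] (n : ℕ) (z : ℕ → S) :
    aeval z (eulerianMvDehom n) = aeval (Sum.elim z fun _ => 1) (eulerianMv n) := by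
  rw [eulerianMvDehom, comp_aeval_apply]
  congr 2
  funext j
  rcases j with j | j <;> simp

lemma aeval_zero_one_eulerianMv (n : ℕ) :
    aeval (Sum.elim (fun _ => (0 : ℝ)) fun _ => 1) (eulerianMv n) = 1 := by
  induction n with
  | zero => simp [eulerianMv]
  | succ n ih =>
    rw [eulerianMv, map_add, map_mul, map_mul, map_mul, ih]
    simp

/-- The case of `l` in the open lower half-plane: `A_n(l a) = l ^ n * A^h_n(a, 1/l)`. -/
lemma eulerianMvDehom_ne_zero_of_im_neg (n : ℕ) (a : ℕ → ℝ) (l : ℂ) (hl : l.im < 0) :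
    aeval (fun i => l * (a i : ℂ)) (eulerianMvDehom n) ≠ 0 := by
  have hl0 : l ≠ 0 := by
    rintro rfl
    simp at hl
  have hz : (Sum.elim (fun i => l * (a i : ℂ)) fun _ => 1 : ℕ ⊕ ℕ → ℂ) =
      fun j => l * (Sum.elim (fun i => (a i : ℂ)) fun _ => l⁻¹ : ℕ ⊕ ℕ → ℂ) j := by
    funext j
    rcases j with j | j <;> simp [hl0]
  rw [aeval_eulerianMvDehom, hz, aeval_mul_of_isHomogeneous (eulerianMv_isHomogeneous n)]
  refine mul_ne_zero (pow_ne_zero _ hl0) (eulerianMv_ne_zero n _ (fun i => by simp) fun i => ?_)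
  simp only [Sum.elim_inr, Complex.inv_im]
  exact div_pos (neg_pos.2 hl) (Complex.normSq_pos.2 hl0)

/-- for every `n ≥ 0`, the dehomogenized multivariate Eulerian polynomial
is a real zero polynomial: `A_n(0) = 1 ≠ 0` and for every `a` and `λ ∈ ℂ`,
`A_n(λa) = 0` implies `λ ∈ ℝ`. -/
theorem stmt12 (n : ℕ) :
    MvPolynomial.eval (fun _ => (0 : ℝ)) (eulerianMvDehom n) = 1 ∧
    ∀ (a : ℕ → ℝ) (l : ℂ),
      MvPolynomial.aeval (fun i => l * (a i : ℂ)) (eulerianMvDehom n) = 0 →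
      ∃ r : ℝ, l = r := by
  refine ⟨?_, fun a l h => ?_⟩
  · rw [← coe_aeval_eq_eval]
    exact (aeval_eulerianMvDehom n _).trans (aeval_zero_one_eulerianMv n)
  · rcases lt_trichotomy l.im 0 with hl | hl | hl
    · exact absurd h (eulerianMvDehom_ne_zero_of_im_neg n a l hl)
    · exact ⟨l.re, Complex.ext (by simp) (by simp [hl])⟩
    · -- The point `l a` equals `(-l) (-a)`, and `-l` is in the open lower half-plane.
      have h' := eulerianMvDehom_ne_zero_of_im_neg n (fun i => -a i) (-l) (by simpa using hl)
      simp only [Complex.ofReal_neg, neg_mul_neg] at h'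
      exact absurd h h'
end

section
/- Let p ∈ ℝ[x_1,…,x_n] be a nonzero homogeneous polynomial. Then p is real stable if and only if for every direction e ∈ ℝ^n with strictly positive coordinates and every a ∈ ℝ^n, the univariate polynomial t ↦ p(a − t·e) has only real roots (i.e., every λ ∈ ℂ with p(a − λe) = 0 is real). -/
/-!
A point `z = x + i y` of the `n`-fold product of the open upper half-plane is the point `x - (-i) y` of the complex
line through the real point `x` in the positive direction `y`. Hence a zero of `p` there is a
non-real root `-i` of a restriction of `p`. Conversely, a root `l` of `t ↦ p(a - t e)` with
negative imaginary part gives a zero of `p` with all imaginary parts positive, and the case of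
positive imaginary part reduces to this one by complex conjugation, as `p` has real coefficients.
-/

open MvPolynomial

/-- a nonzero homogeneous polynomial `p ∈ ℝ[x_1,…,x_n]` is real stable if and
only if for every direction `e ∈ ℝ^n` with strictly positive coordinates and every
`a ∈ ℝ^n`, the univariate polynomial `t ↦ p(a − t·e)` has only real roots. -/
theorem stmt14 (n : ℕ) (p : MvPolynomial (Fin n) ℝ) (hp : p ≠ 0) (d : ℕ)
    (hhom : p.IsHomogeneous d) :
    (∀ z : Fin n → ℂ, (∀ i, 0 < (z i).im) → MvPolynomial.aeval z p ≠ 0) ↔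
    (∀ e : Fin n → ℝ, (∀ i, 0 < e i) → ∀ (a : Fin n → ℝ) (l : ℂ),
        MvPolynomial.aeval (fun i => (a i : ℂ) - l * (e i : ℂ)) p = 0 → ∃ r : ℝ, l = r) := by
  constructor
  · intro h e he a l hl
    rcases lt_trichotomy l.im 0 with hneg | hzero | hpos
    · refine absurd hl (h _ fun i => ?_)
      simpa using mul_neg_of_neg_of_pos hneg (he i)
    · exact ⟨l.re, Complex.ext (by simp) (by simp [hzero])⟩
    · refine absurd ?_ (h (fun i => (a i : ℂ) - (starRingEnd ℂ) l * (e i : ℂ)) fun i => ?_)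
      · have hconj := MvPolynomial.comp_aeval_apply
          (fun i => (a i : ℂ) - l * (e i : ℂ)) Complex.conjAe.toAlgHom p
        rw [hl, map_zero] at hconj
        simpa using hconj.symm
      · simpa using mul_pos hpos (he i)
  · intro h z hz hzero
    obtain ⟨r, hr⟩ := h (fun i => (z i).im) hz (fun i => (z i).re) (-Complex.I) (by
      convert hzero using 3
      funext i
      apply Complex.ext <;> simp)
    simpa using congrArg Complex.im hr
end

section
/- Let A, B be real symmetric n×n matrices with A positive semidefinite and det(A) ≠ 0, and let U be the connected component of 0 in {x ∈ ℝ : det(A + x·B) ≠ 0}. Then for every x_0 in the closure of U, the matrix A + x_0·B is positive semidefinite; consequently, for every v ∈ ℝ^n with v^T B v > 0, every x_0 in the closure of U satisfies x_0 ≥ −(v^T A v)/(v^T B v). -/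
/-!
Let `P = {x | A + x • B is positive definite}`. Compactness of the unit sphere makes `P` open
(`isOpen_posDef_pencil`), and positive semidefiniteness is a closed condition on `x`
(`isClosed_posSemidef_pencil`). A positive semidefinite matrix with nonzero determinant is positive
definite, so every point of `closure P` where `det (A + x • B) ≠ 0` lies in `P`: `P` is clopen
relative to the nonvanishing set. It contains `0`, hence the whole connected component of `0`, and
passing to the closure gives semidefiniteness. The lower bound on `x₀` is
`0 ≤ vᵀ(A + x₀ B)v = vᵀAv + x₀ vᵀBv` divided by `vᵀBv > 0`.
-/

open Matrix

lemma isHermitian_pencil {n : ℕ} {A B : Matrix (Fin n) (Fin n) ℝ}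
    (hA : A.IsSymm) (hB : B.IsSymm) (x : ℝ) : (A + x • B).IsHermitian := by
  rw [IsHermitian, conjTranspose_eq_transpose_of_trivial]
  exact hA.add (hB.smul x)

lemma isClosed_posSemidef_pencil {n : ℕ} {A B : Matrix (Fin n) (Fin n) ℝ}
    (hA : A.IsSymm) (hB : B.IsSymm) : IsClosed {x : ℝ | (A + x • B).PosSemidef} := by
  have h : {x : ℝ | (A + x • B).PosSemidef}
      = ⋂ v : Fin n → ℝ, {x : ℝ | 0 ≤ v ⬝ᵥ (A + x • B) *ᵥ v} := by
    ext x
    simp [posSemidef_iff_dotProduct_mulVec, hA.add (hB.smul x)]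
  rw [h]
  exact isClosed_iInter fun v => isClosed_le continuous_const (by fun_prop)

/-- The complement is the projection, along the compact unit sphere, of the closed set of pairs
`(v, x)` with `vᵀ(A + x B)v ≤ 0`. The sphere is that of the sup norm on `Fin n → ℝ`. -/
lemma isOpen_posDef_pencil {n : ℕ} {A B : Matrix (Fin n) (Fin n) ℝ}
    (hA : A.IsSymm) (hB : B.IsSymm) : IsOpen {x : ℝ | (A + x • B).PosDef} := by
  let K := Metric.sphere (0 : Fin n → ℝ) 1
  have : CompactSpace K := isCompact_iff_compactSpace.mp (isCompact_sphere _ _)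
  let C : Set (K × ℝ) := {p | (p.1 : Fin n → ℝ) ⬝ᵥ (A + p.2 • B) *ᵥ (p.1 : Fin n → ℝ) ≤ 0}
  have hC : IsClosed C := isClosed_le (by fun_prop) continuous_const
  have hproj : IsClosed (Set.image Prod.snd C) := isClosedMap_snd_of_compactSpace C hC
  convert hproj.isOpen_compl using 1
  ext x
  simp only [Set.mem_ofPred_eq, Set.mem_compl_iff]
  constructor
  · rintro hx ⟨⟨⟨v, hv⟩, y⟩, hp, rfl⟩
    have hv0 : v ≠ 0 := by
      rintro rfl
      simp [K] at hv
    have := hx.dotProduct_mulVec_pos hv0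
    simp only [star_trivial] at this
    exact absurd hp (not_le.mpr this)
  · intro hx
    refine posDef_iff_dotProduct_mulVec.mpr ⟨isHermitian_pencil hA hB x, fun v hv => ?_⟩
    by_contra hneg
    rw [star_trivial, not_lt] at hneg
    refine hx ⟨(⟨‖v‖⁻¹ • v, ?_⟩, x), ?_, rfl⟩
    · simp [K, norm_smul, hv]
    · change (‖v‖⁻¹ • v) ⬝ᵥ (A + x • B) *ᵥ (‖v‖⁻¹ • v) ≤ 0
      rw [mulVec_smul, smul_dotProduct, dotProduct_smul, smul_eq_mul, smul_eq_mul]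
      have : 0 ≤ ‖v‖⁻¹ := by positivity
      exact mul_nonpos_of_nonneg_of_nonpos this (mul_nonpos_of_nonneg_of_nonpos this hneg)

/-- let `A, B` be real symmetric `n×n` matrices with `A` positive semidefinite
and `det A ≠ 0`, and let `U` be the connected component of `0` in
`{x ∈ ℝ : det(A + x·B) ≠ 0}`. Then for every `x₀` in the closure of `U`, the matrix
`A + x₀·B` is positive semidefinite; consequently, for every `v ∈ ℝ^n` with `vᵀBv > 0`,
every `x₀` in the closure of `U` satisfies `x₀ ≥ −(vᵀAv)/(vᵀBv)`. -/
theorem stmt16 (n : ℕ) (A B : Matrix (Fin n) (Fin n) ℝ)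
    (hAsymm : A.IsSymm) (hBsymm : B.IsSymm) (hA : A.PosSemidef) (hdet : A.det ≠ 0) :
    (∀ x₀ ∈ closure (connectedComponentIn {x : ℝ | (A + x • B).det ≠ 0} 0),
        (A + x₀ • B).PosSemidef) ∧
    ∀ v : Fin n → ℝ, 0 < v ⬝ᵥ B.mulVec v →
      ∀ x₀ ∈ closure (connectedComponentIn {x : ℝ | (A + x • B).det ≠ 0} 0),
        -(v ⬝ᵥ A.mulVec v) / (v ⬝ᵥ B.mulVec v) ≤ x₀ := by
  have hpsd : ∀ x₀ ∈ closure (connectedComponentIn {x : ℝ | (A + x • B).det ≠ 0} 0),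
      (A + x₀ • B).PosSemidef := by
    have hclosed := isClosed_posSemidef_pencil hAsymm hBsymm
    have h0 : (0 : ℝ) ∈ {x : ℝ | (A + x • B).det ≠ 0} := by simpa using hdet
    have hsub : connectedComponentIn {x : ℝ | (A + x • B).det ≠ 0} 0
        ⊆ {x : ℝ | (A + x • B).PosDef} := by
      refine isPreconnected_connectedComponentIn.subset_of_closure_inter_subset
        (isOpen_posDef_pencil hAsymm hBsymm) ⟨0, mem_connectedComponentIn h0, ?_⟩ ?_
      · simpa using hA.posDef_iff_det_ne_zero.mpr hdet
      · rintro x ⟨hx, hxU⟩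
        have hxpsd : (A + x • B).PosSemidef :=
          closure_minimal (fun y (hy : (A + y • B).PosDef) => hy.posSemidef) hclosed hx
        exact hxpsd.posDef_iff_det_ne_zero.mpr (connectedComponentIn_subset _ _ hxU)
    intro x₀ hx₀
    exact closure_minimal (fun y hy => (hsub hy).posSemidef) hclosed hx₀
  refine ⟨hpsd, fun v hv x₀ hx₀ => ?_⟩
  have h := (hpsd x₀ hx₀).dotProduct_mulVec_nonneg v
  rw [star_trivial, add_mulVec, smul_mulVec, dotProduct_add, dotProduct_smul, smul_eq_mul] at h
  rw [div_le_iff₀ hv]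
  linarith
end

section
/- Let m ≥ 3 be an integer and set n = 2m. Define D(m,y) and N(m,y) as in the context. Then for every y ∈ ℝ with N(m,y) > 0, the largest real root q of the Eulerian polynomial A_n(x) = Σ_{σ ∈ S_{n+1}} x^{des(σ)} satisfies q ≥ −D(m,y)/N(m,y). -/
/-!
The proof bounds the largest root directly. Carlitz's identity
`A_n(x) / (1 - x) ^ (n + 2) = ∑ k, (k + 1) ^ (n + 1) x ^ k` (`hasSum_eulerian`) follows from
Worpitzky's identity, which is obtained by counting words according to their stable sorting
permutation (`card_sort_eq`). At `-x` with `x` close to `2 ^ -(n + 1)` the series alternates, and from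
its third term on it decreases, so `A_n(-x) ≤ 0` as soon as
`1 - 2 ^ N x + 3 ^ N x² - 4 ^ N x³ + 5 ^ N x⁴ ≤ 0`, where `N = n + 1`. Since `A_n(0) ≥ 0`, the
intermediate value theorem then gives a root in `[-x, 0]`, hence `-x ≤ q` (`neg_le_largest_root`).

It remains to find such an `x` with `D(m, y) - x N(m, y) ≥ 0` for all `y` (`bound_of_test_point`).
Put `u = 2 ^ m`, `w = 3 ^ m` and `a = 3 w² / (4 u⁴) = (3/4) ^ (2 m + 1)`. The smaller root of
`1 - 2 u² x + 3 w² x² = 0` is `x = (1 + a + 2 a² + ⋯) / (2 u²)`, whereas the discriminant in `y` of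
`D - x N` stays negative up to about `x = (1 + a + 3 a²) / (2 u²)`; the choice
`x = (1 + a + 9/4 a²) / (2 u²)` satisfies both requirements for `m ≥ 12` (`bound_large`). For
`3 ≤ m ≤ 11` explicit rational values of `x` are used (`bound_small`).
-/

/-- Number of descents of a permutation of `{0,…,n}` (positions `i` with `σ(i) > σ(i+1)`). -/
def des {n : ℕ} (σ : Equiv.Perm (Fin (n + 1))) : ℕ :=
  (Finset.univ.filter fun i : Fin n => σ i.succ < σ i.castSucc).card

/-- The `n`-th Eulerian polynomial `A_n(x) = Σ_{σ ∈ S_{n+1}} x^{des σ}`. -/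
noncomputable def eulerianPoly (n : ℕ) : Polynomial ℝ :=
  ∑ σ : Equiv.Perm (Fin (n + 1)), Polynomial.X ^ des σ

/-- The quantity `D(m,y)` obtained by linearizing the diagonal restriction of the
spectrahedral relaxation of the multivariate Eulerian polynomial `A_{2m}` with the vector
`v = (y, (−2^{m−i})_{i=3}^{m}, 0, 1/2, (1)_{i=1}^{m})`. -/
noncomputable def Dv (m : ℕ) (y : ℝ) : ℝ :=
  -1/12 + (2:ℝ)^(3*(m:ℤ)) + (2:ℝ)^((m:ℤ)+2) + 5*(2:ℝ)^(2*(m:ℤ)-3) - 7*(2:ℝ)^(2*(m:ℤ)-1)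
  + 3*(2:ℝ)^(3*(m:ℤ)+1) - (2:ℝ)^(3*(m:ℤ)+3) + (1/3)*(2:ℝ)^(4*(m:ℤ)+2)
  + (1/3)*(2:ℝ)^(4*(m:ℤ)+3)
  - 2*(3:ℝ)^((m:ℤ)-1) - (2:ℝ)^((m:ℤ)+4)*(3:ℝ)^((m:ℤ)-1) + (3:ℝ)^(m:ℤ)
  - (2:ℝ)^((m:ℤ)+1)*(3:ℝ)^(m:ℤ) - (3:ℝ)^((m:ℤ)+1) + (2:ℝ)^((m:ℤ)+2)*(3:ℝ)^((m:ℤ)+1)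
  - 2*(3:ℝ)^(2*(m:ℤ)+1) - (11/3)*(4:ℝ)^((m:ℤ)-2)
  + (m:ℝ) - (2:ℝ)^(3*(m:ℤ))*(m:ℝ) - 5*(2:ℝ)^(2*(m:ℤ)-4)*(m:ℝ)
  - (2:ℝ)^(2*(m:ℤ)-3)*(m:ℝ) + (2:ℝ)^(2*(m:ℤ)-1)*(m:ℝ) + (4:ℝ)^((m:ℤ)-2)*(m:ℝ)
  + (2:ℝ)^(2*(m:ℤ)-4)*(m:ℝ)^2
  + (-3 + (2:ℝ)^((m:ℤ)-1) + (2:ℝ)^((m:ℤ)+1) - (2:ℝ)^((m:ℤ)+2) + (2:ℝ)^(2*(m:ℤ)+2)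
      - 2*(m:ℝ) - (2:ℝ)^((m:ℤ)-1)*(m:ℝ)) * y
  + 2*(m:ℝ)*y^2

/-- The quantity `N(m,y)` obtained by linearizing the diagonal restriction of the
spectrahedral relaxation of the multivariate Eulerian polynomial `A_{2m}` with the vector
`v = (y, (−2^{m−i})_{i=3}^{m}, 0, 1/2, (1)_{i=1}^{m})`. -/
noncomputable def Nv (m : ℕ) (y : ℝ) : ℝ :=
  1/12 + (2:ℝ)^(2*(m:ℤ)) - (2:ℝ)^(3*(m:ℤ)) + 5*(2:ℝ)^(4*(m:ℤ)) - (2:ℝ)^((m:ℤ)+2)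
  + (11/3)*(2:ℝ)^(2*(m:ℤ)-4) - 5*(2:ℝ)^(2*(m:ℤ)-3) - 7*(2:ℝ)^(2*(m:ℤ)-1)
  + 3*(2:ℝ)^(2*(m:ℤ)+1) + 9*(2:ℝ)^(3*(m:ℤ)-3) - 47*(2:ℝ)^(3*(m:ℤ)-2)
  + 3*(2:ℝ)^(3*(m:ℤ)-1) - (2:ℝ)^(3*(m:ℤ)+2) - (1/7)*(2:ℝ)^(3*(m:ℤ)+3)
  + (1/7)*(2:ℝ)^(3*(m:ℤ)+4) + (5/7)*(2:ℝ)^(3*(m:ℤ)+5) - (27/5)*(2:ℝ)^(4*(m:ℤ)-3)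
  + 5*(2:ℝ)^(4*(m:ℤ)-1) - (2:ℝ)^(4*(m:ℤ)+1) + (2:ℝ)^(5*(m:ℤ)+1) + 3*(2:ℝ)^(5*(m:ℤ)+2)
  - (2:ℝ)^(5*(m:ℤ)+4) + (1/7)*(2:ℝ)^(6*(m:ℤ)+3) + (1/3)*(2:ℝ)^(6*(m:ℤ)+4)
  + (1/21)*(2:ℝ)^(6*(m:ℤ)+5)
  + 2*(3:ℝ)^((m:ℤ)-1) - 11*(2:ℝ)^(2*(m:ℤ))*(3:ℝ)^((m:ℤ)-1)
  - (1/5)*(2:ℝ)^((m:ℤ)+3)*(3:ℝ)^((m:ℤ)-1) + (2:ℝ)^((m:ℤ)+4)*(3:ℝ)^((m:ℤ)-1)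
  + 13*(2:ℝ)^(2*(m:ℤ)+2)*(3:ℝ)^((m:ℤ)-1) - (2:ℝ)^(3*(m:ℤ)+5)*(3:ℝ)^((m:ℤ)-1)
  - (3:ℝ)^(m:ℤ) - (2:ℝ)^((m:ℤ)-1)*(3:ℝ)^(m:ℤ) + (2:ℝ)^((m:ℤ)+1)*(3:ℝ)^(m:ℤ)
  + 7*(2:ℝ)^(2*(m:ℤ)-1)*(3:ℝ)^(m:ℤ) - (2:ℝ)^(3*(m:ℤ)+2)*(3:ℝ)^(m:ℤ)
  + (3:ℝ)^((m:ℤ)+1) - (2:ℝ)^((m:ℤ)+2)*(3:ℝ)^((m:ℤ)+1) - (2:ℝ)^(2*(m:ℤ)+3)*(3:ℝ)^((m:ℤ)+1)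
  + (2:ℝ)^(3*(m:ℤ)+3)*(3:ℝ)^((m:ℤ)+1) - (2:ℝ)^(2*(m:ℤ)+1)*(3:ℝ)^((m:ℤ)+2)
  + (2:ℝ)^(2*(m:ℤ)-2)*(3:ℝ)^((m:ℤ)+3)
  + 4*(3:ℝ)^(2*(m:ℤ)+1) - (2:ℝ)^(m:ℤ)*(3:ℝ)^(2*(m:ℤ)+1)
  - (2:ℝ)^((m:ℤ)+1)*(3:ℝ)^(2*(m:ℤ)+1) + (2:ℝ)^((m:ℤ)+2)*(3:ℝ)^(2*(m:ℤ)+1)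
  - (1/5)*(2:ℝ)^(2*(m:ℤ)+2)*(3:ℝ)^(2*(m:ℤ)+1)
  + (6:ℝ)^(m:ℤ) - (6:ℝ)^((m:ℤ)+1) - (13/5)*(6:ℝ)^(2*(m:ℤ)+1)
  - (m:ℝ) - (2:ℝ)^(2*(m:ℤ))*(m:ℝ) + (2:ℝ)^(3*(m:ℤ))*(m:ℝ)
  + 5*(2:ℝ)^(2*(m:ℤ)-3)*(m:ℝ) + (2:ℝ)^(2*(m:ℤ)-2)*(m:ℝ) - 5*(2:ℝ)^(4*(m:ℤ)-2)*(m:ℝ)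
  - (2:ℝ)^(4*(m:ℤ)-1)*(m:ℝ) + (2:ℝ)^(4*(m:ℤ)+1)*(m:ℝ) - (2:ℝ)^(5*(m:ℤ)+1)*(m:ℝ)
  + (2:ℝ)^(2*(m:ℤ)+1)*(3:ℝ)^((m:ℤ)-1)*(m:ℝ) + (2:ℝ)^(2*(m:ℤ)-2)*(3:ℝ)^(m:ℤ)*(m:ℝ)
  - (2:ℝ)^(2*(m:ℤ)-1)*(3:ℝ)^((m:ℤ)+1)*(m:ℝ) + (2:ℝ)^((m:ℤ)-1)*(3:ℝ)^(2*(m:ℤ)+1)*(m:ℝ)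
  - (2:ℝ)^(2*(m:ℤ)-4)*(m:ℝ)^2 + (2:ℝ)^(4*(m:ℤ)-3)*(m:ℝ)^2
  + (3 - 3*(2:ℝ)^((m:ℤ)-1) + (2:ℝ)^(m:ℤ) + 5*(2:ℝ)^(3*(m:ℤ)) + (2:ℝ)^((m:ℤ)+1)
      - (2:ℝ)^(2*(m:ℤ)+2) + (2:ℝ)^(3*(m:ℤ)+1) - (2:ℝ)^(3*(m:ℤ)+3) + (2:ℝ)^(4*(m:ℤ)+3)
      - (2:ℝ)^((m:ℤ)+4)*(3:ℝ)^((m:ℤ)-1) - (2:ℝ)^((m:ℤ)+1)*(3:ℝ)^(m:ℤ)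
      + (2:ℝ)^((m:ℤ)+2)*(3:ℝ)^((m:ℤ)+1) - 4*(3:ℝ)^(2*(m:ℤ)+1)
      + 2*(m:ℝ) + (2:ℝ)^((m:ℤ)-1)*(m:ℝ) - (2:ℝ)^(3*(m:ℤ))*(m:ℝ)) * y
  + (-2 + (2:ℝ)^(2*(m:ℤ)+1) - 2*(m:ℝ)) * y^2

/-! ### Worpitzky's identity and the generating function -/

/-- The number of ascents of `σ` at positions strictly before `i`. -/
def ascBefore {n : ℕ} (σ : Equiv.Perm (Fin (n + 1))) (i : Fin (n + 1)) : ℕ :=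
  (Finset.univ.filter fun j : Fin n => j.castSucc < i ∧ σ j.castSucc < σ j.succ).card

lemma ascBefore_zero {n : ℕ} (σ : Equiv.Perm (Fin (n + 1))) : ascBefore σ 0 = 0 := by
  simp [ascBefore]

lemma ascBefore_succ {n : ℕ} (σ : Equiv.Perm (Fin (n + 1))) (i : Fin n) :
    ascBefore σ i.succ =
      ascBefore σ i.castSucc + if σ i.castSucc < σ i.succ then 1 else 0 := by
  have hset : (Finset.univ.filter fun j : Fin n =>
        j.castSucc < i.succ ∧ σ j.castSucc < σ j.succ) =
      (Finset.univ.filter fun j : Fin n =>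
        j.castSucc < i.castSucc ∧ σ j.castSucc < σ j.succ) ∪
      (if σ i.castSucc < σ i.succ then {i} else ∅) := by
    ext j
    have h1 : j.castSucc < i.succ ↔ j.castSucc < i.castSucc ∨ j = i := by
      simp only [Fin.lt_def, Fin.ext_iff, Fin.val_castSucc, Fin.val_succ]
      omega
    simp only [Finset.mem_filter, Finset.mem_univ, true_and, Finset.mem_union, h1]
    split_ifs with h
    · simp only [Finset.mem_singleton]
      constructor
      · rintro ⟨h2 | h2, h3⟩
        · exact Or.inl ⟨h2, h3⟩
        · exact Or.inr h2
      · rintro (h2 | h2)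
        · exact ⟨Or.inl h2.1, h2.2⟩
        · subst h2
          exact ⟨Or.inr rfl, h⟩
    · simp only [Finset.notMem_empty, or_false]
      constructor
      · rintro ⟨h2 | h2, h3⟩
        · exact ⟨h2, h3⟩
        · subst h2
          exact absurd h3 h
      · exact fun h2 => ⟨Or.inl h2.1, h2.2⟩
  unfold ascBefore
  rw [hset, Finset.card_union_of_disjoint]
  · split_ifs <;> simp
  · split_ifs <;> simp

lemma ascBefore_last_add_des {n : ℕ} (σ : Equiv.Perm (Fin (n + 1))) :
    ascBefore σ (Fin.last n) + des σ = n := by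
  have h := Finset.card_filter_add_card_filter_not (s := (Finset.univ : Finset (Fin n)))
    (fun j : Fin n => σ j.castSucc < σ j.succ)
  rw [Finset.card_univ, Fintype.card_fin] at h
  have hd : des σ = (Finset.univ.filter fun j : Fin n => ¬ σ j.castSucc < σ j.succ).card := by
    unfold des
    congr 1
    ext j
    simp only [Finset.mem_filter, Finset.mem_univ, true_and, not_lt]
    refine ⟨le_of_lt, fun h => lt_of_le_of_ne h ?_⟩
    intro he
    have := congrArg Fin.val (σ.injective he)
    simp at this
  rw [hd]
  refine Eq.trans ?_ h
  simp [ascBefore, Fin.castSucc_lt_last]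

/-- Adding to the values of `f ∘ σ` the number of earlier ascents of `σ` turns
"weakly increasing, strictly at the descents of `σ`" into "strictly increasing". This is the
encoding of the words `f` whose stable sorting permutation is `σ`. -/
lemma sort_eq_iff_strictMono {n K : ℕ} (σ : Equiv.Perm (Fin (n + 1))) (f : Fin (n + 1) → Fin K) :
    Tuple.sort f = σ ↔ StrictMono fun i => (f (σ i) : ℕ) + ascBefore σ i := by
  rw [eq_comm, Tuple.eq_sort_iff', Fin.strictMono_iff_lt_succ, Fin.strictMono_iff_lt_succ]
  refine forall_congr' fun i => ?_
  rw [ascBefore_succ]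
  have hne : σ i.castSucc ≠ σ i.succ := fun h => by
    have := congrArg Fin.val (σ.injective h)
    simp at this
  change toLex (f (σ i.castSucc), σ i.castSucc) < toLex (f (σ i.succ), σ i.succ) ↔ _
  rw [Prod.Lex.toLex_lt_toLex]
  simp only [Fin.ext_iff, Fin.lt_def] at *
  split_ifs with h <;> omega

/-- The number of words over a `K`-letter alphabet whose stable sorting permutation is `σ`. -/
lemma card_sort_eq {n K : ℕ} (σ : Equiv.Perm (Fin (n + 1))) :
    (Finset.univ.filter fun f : Fin (n + 1) → Fin K => Tuple.sort f = σ).card =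
      (K + n - des σ).choose (n + 1) := by
  have hlast := ascBefore_last_add_des σ
  rw [← Finset.card_range (K + n - des σ), ← Finset.card_powersetCard]
  refine Finset.card_bij
    (fun f _ => Finset.univ.image fun i => (f (σ i) : ℕ) + ascBefore σ i) ?_ ?_ ?_
  · intro f hf
    rw [Finset.mem_filter, sort_eq_iff_strictMono] at hf
    rw [Finset.mem_powersetCard, Finset.card_image_of_injective _ hf.2.injective]
    refine ⟨fun x hx => ?_, by simp⟩
    obtain ⟨i, -, rfl⟩ := Finset.mem_image.1 hx
    have h1 := hf.2.monotone (Fin.le_last i)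
    have h2 := (f (σ (Fin.last n))).isLt
    rw [Finset.mem_range]
    omega
  · intro f hf g hg hfg
    rw [Finset.mem_filter, sort_eq_iff_strictMono] at hf hg
    have hr : Set.range (fun i => (f (σ i) : ℕ) + ascBefore σ i) =
        Set.range (fun i => (g (σ i) : ℕ) + ascBefore σ i) := by
      have := congrArg (fun s : Finset ℕ => (s : Set ℕ)) hfg
      simpa using this
    have hfun := (hf.2.range_inj hg.2).1 hr
    funext j
    have := congrFun hfun (σ.symm j)
    simp only [Equiv.apply_symm_apply] at this
    exact Fin.ext (by omega)
  · intro s hs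
    rw [Finset.mem_powersetCard] at hs
    set h : Fin (n + 1) → ℕ := ⇑(s.orderEmbOfFin hs.2) with hh
    have hmono : StrictMono h := (s.orderEmbOfFin hs.2).strictMono
    have hle : ∀ i, ascBefore σ i ≤ h i := by
      intro i
      induction i using Fin.induction with
      | zero => simp [ascBefore_zero]
      | succ i ih =>
        have := hmono (Fin.castSucc_lt_succ (i := i))
        rw [ascBefore_succ]
        split_ifs <;> omega
    have hgm : Monotone fun i => h i - ascBefore σ i := by
      rw [Fin.monotone_iff_le_succ]
      intro i
      have := hmono (Fin.castSucc_lt_succ (i := i))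
      have h2 := hle i.succ
      rw [ascBefore_succ] at h2 ⊢
      split_ifs at * <;> omega
    have hlt : ∀ i, h i - ascBefore σ i < K := by
      intro i
      refine lt_of_le_of_lt (hgm (Fin.le_last i)) ?_
      have h1 : h (Fin.last n) ∈ Finset.range (K + n - des σ) :=
        hs.1 (s.orderEmbOfFin_mem hs.2 _)
      have := hle (Fin.last n)
      rw [Finset.mem_range] at h1
      change h (Fin.last n) - ascBefore σ (Fin.last n) < K
      omega
    have heq : (fun i => ((⟨h (σ.symm (σ i)) - ascBefore σ (σ.symm (σ i)), hlt _⟩ : Fin K) : ℕ) +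
        ascBefore σ i) = h := by
      funext i
      simp only [Equiv.symm_apply_apply]
      have := hle i
      omega
    refine ⟨fun j => ⟨h (σ.symm j) - ascBefore σ (σ.symm j), hlt _⟩, ?_, ?_⟩
    · rw [Finset.mem_filter, sort_eq_iff_strictMono]
      refine ⟨Finset.mem_univ _, ?_⟩
      rw [heq]
      exact hmono
    · rw [heq, hh]
      ext x
      simp

/-- Worpitzky's identity: every word of length `n + 1` is sorted by exactly one permutation. -/
lemma worpitzky (n K : ℕ) :
    K ^ (n + 1) = ∑ σ : Equiv.Perm (Fin (n + 1)), (K + n - des σ).choose (n + 1) := by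
  have h := Finset.card_eq_sum_card_fiberwise (s := (Finset.univ : Finset (Fin (n + 1) → Fin K)))
    (t := (Finset.univ : Finset (Equiv.Perm (Fin (n + 1))))) (f := Tuple.sort)
    (fun _ _ => Finset.mem_coe.2 (Finset.mem_univ _))
  simp only [card_sort_eq] at h
  rw [← h]
  simp

lemma hasSum_choose_shift (n d : ℕ) (hd : d ≤ n) {x : ℝ} (hx : |x| < 1) :
    HasSum (fun k : ℕ => (((k + 1) + n - d).choose (n + 1) : ℝ) * x ^ k)
      (x ^ d / (1 - x) ^ (n + 2)) := by
  have h := (hasSum_choose_mul_geometric_of_norm_lt_one (𝕜 := ℝ) (n + 1)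
    (by simpa using hx : ‖x‖ < 1)).mul_left (x ^ d)
  rw [← hasSum_nat_add_iff' d]
  have hz : ∑ i ∈ Finset.range d, (((i + 1) + n - d).choose (n + 1) : ℝ) * x ^ i = 0 := by
    refine Finset.sum_eq_zero fun i hi => ?_
    rw [Finset.mem_range] at hi
    rw [Nat.choose_eq_zero_of_lt (by omega)]
    simp
  rw [hz, sub_zero]
  convert! h using 1
  · funext k
    have : k + d + 1 + n - d = k + (n + 1) := by omega
    rw [this]
    ring
  · ring

/-- Carlitz's generating function identity
`A_n(x) / (1 - x) ^ (n + 2) = ∑ k, (k + 1) ^ (n + 1) * x ^ k` for `|x| < 1`. -/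
lemma hasSum_eulerian (n : ℕ) {x : ℝ} (hx : |x| < 1) :
    HasSum (fun k : ℕ => ((k : ℝ) + 1) ^ (n + 1) * x ^ k)
      ((eulerianPoly n).eval x / (1 - x) ^ (n + 2)) := by
  have h := hasSum_sum (s := (Finset.univ : Finset (Equiv.Perm (Fin (n + 1)))))
    (fun σ _ => hasSum_choose_shift n (des σ)
      (by have := ascBefore_last_add_des σ; omega) hx)
  convert! h using 1
  · funext k
    have := worpitzky n (k + 1)
    rw [← Finset.sum_mul]
    congr 1
    exact_mod_cast this
  · rw [← Finset.sum_div]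
    congr 1
    simp [eulerianPoly, Polynomial.eval_finsetSum]

/-! ### Locating the largest root -/

/-- For `4 ^ N * x ≤ 3 ^ N` the terms `(k + 1) ^ N * x ^ k` decrease from `k = 2` on, so truncating
the alternating series after a positive term bounds it from above. -/
lemma eulerian_eval_neg_le (n : ℕ) {x : ℝ} (hx : 0 < x)
    (h43 : (4 : ℝ) ^ (n + 1) * x ≤ 3 ^ (n + 1)) :
    (eulerianPoly n).eval (-x) / (1 + x) ^ (n + 2) ≤
      1 - 2 ^ (n + 1) * x + 3 ^ (n + 1) * x ^ 2 - 4 ^ (n + 1) * x ^ 3 + 5 ^ (n + 1) * x ^ 4 := by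
  have hx1 : x < 1 := by
    have h : (3 : ℝ) ^ (n + 1) < 4 ^ (n + 1) := by gcongr; norm_num
    by_contra hc
    push Not at hc
    have : (4 : ℝ) ^ (n + 1) * 1 ≤ 4 ^ (n + 1) * x := by gcongr
    linarith
  have habs : |(-x)| < 1 := by rw [abs_neg, abs_of_pos hx]; exact hx1
  have hs := hasSum_eulerian n habs
  rw [sub_neg_eq_add] at hs
  set g : ℕ → ℝ := fun k => ((k : ℝ) + 3) ^ (n + 1) * x ^ (k + 2) with hg
  have hanti : Antitone g := by
    refine antitone_nat_of_succ_le fun k => ?_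
    have h1 : ((k : ℝ) + 4) ^ (n + 1) * x ≤ (k + 3) ^ (n + 1) := by
      have h2 : ((k : ℝ) + 4) * 3 ≤ 4 * (k + 3) := by
        have : (0 : ℝ) ≤ k := Nat.cast_nonneg k
        linarith
      have h3 : (((k : ℝ) + 4) * 3) ^ (n + 1) ≤ (4 * (k + 3)) ^ (n + 1) := by gcongr
      rw [mul_pow, mul_pow] at h3
      have h4 : (0 : ℝ) < 3 ^ (n + 1) := by positivity
      refine le_of_mul_le_mul_right ?_ h4
      calc ((k : ℝ) + 4) ^ (n + 1) * x * 3 ^ (n + 1)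
          = ((k : ℝ) + 4) ^ (n + 1) * 3 ^ (n + 1) * x := by ring
        _ ≤ 4 ^ (n + 1) * (k + 3) ^ (n + 1) * x := by gcongr
        _ = (k + 3) ^ (n + 1) * (4 ^ (n + 1) * x) := by ring
        _ ≤ (k + 3) ^ (n + 1) * 3 ^ (n + 1) := by gcongr
    calc g (k + 1) = ((k : ℝ) + 4) ^ (n + 1) * x * x ^ (k + 2) := by
          simp only [hg]; push_cast; ring
      _ ≤ (k + 3) ^ (n + 1) * x ^ (k + 2) := by gcongr
      _ = g k := rfl
  have hs2 := (hasSum_nat_add_iff' 2).2 hs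
  have hl := hs2.tendsto_sum_nat
  have hl' : Filter.Tendsto (fun N => ∑ i ∈ Finset.range N, (-1) ^ i * g i) Filter.atTop
      (nhds ((eulerianPoly n).eval (-x) / (1 + x) ^ (n + 2) -
        ∑ i ∈ Finset.range 2, ((i : ℝ) + 1) ^ (n + 1) * (-x) ^ i)) := by
    refine hl.congr fun N => Finset.sum_congr rfl fun i _ => ?_
    simp only [hg]
    push_cast
    rw [neg_pow x, pow_add (-1 : ℝ)]
    ring
  have hle := hanti.tendsto_le_alternating_series hl' 1
  simp only [hg, Finset.sum_range_succ, Finset.sum_range_zero] at hle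
  norm_num at hle
  linarith

/-- A sign change: a point `-x` where the truncated series is nonpositive bounds the largest root
from below. -/
lemma neg_le_largest_root (n : ℕ) {x q : ℝ} (hx : 0 < x)
    (h43 : (4 : ℝ) ^ (n + 1) * x ≤ 3 ^ (n + 1))
    (hneg : 1 - 2 ^ (n + 1) * x + 3 ^ (n + 1) * x ^ 2 - 4 ^ (n + 1) * x ^ 3
      + 5 ^ (n + 1) * x ^ 4 ≤ 0)
    (hmax : ∀ r : ℝ, (eulerianPoly n).eval r = 0 → r ≤ q) : -x ≤ q := by
  have h1 : (eulerianPoly n).eval (-x) ≤ 0 := by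
    have h := (eulerian_eval_neg_le n hx h43).trans hneg
    have hp : (0 : ℝ) < (1 + x) ^ (n + 2) := by positivity
    by_contra hc
    push Not at hc
    have := div_pos hc hp
    linarith
  have h0 : 0 ≤ (eulerianPoly n).eval 0 := by
    rw [eulerianPoly, Polynomial.eval_finsetSum]
    refine Finset.sum_nonneg fun σ _ => ?_
    simp only [Polynomial.eval_pow, Polynomial.eval_X]
    positivity
  obtain ⟨r, hr, hr0⟩ := intermediate_value_Icc (by linarith : -x ≤ 0)
    (eulerianPoly n).continuous.continuousOn ⟨h1, h0⟩
  exact hr.1.trans (hmax r hr0)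

/-! ### Normal forms of `D` and `N` in `2 ^ m`, `3 ^ m` and `m` -/

lemma Dv_eq (m : ℕ) (y : ℝ) : Dv m y =
    (4 * (2 ^ m) ^ 4 - 6 * (3 ^ m) ^ 2 - (m + 1) * (2 ^ m) ^ 3 + 14 / 3 * 2 ^ m * 3 ^ m
      + (1 / 16 * m ^ 2 + 1 / 8 * m - 149 / 48) * (2 ^ m) ^ 2 - 8 / 3 * 3 ^ m + 4 * 2 ^ m
      + m - 1 / 12)
    + (4 * (2 ^ m) ^ 2 - (m / 2 + 3 / 2) * 2 ^ m - 2 * m - 3) * y + 2 * m * y ^ 2 := by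
  have h4 : (4 : ℝ) ^ m = (2 ^ m) ^ 2 := by
    rw [← pow_mul, mul_comm, pow_mul]; norm_num
  have h2' : (2 : ℝ) ≠ 0 := two_ne_zero
  have h3' : (3 : ℝ) ≠ 0 := three_ne_zero
  have h4' : (4 : ℝ) ≠ 0 := four_ne_zero
  simp only [Dv, zpow_add₀ h2', zpow_add₀ h3', zpow_sub₀ h2', zpow_sub₀ h3', zpow_sub₀ h4',
    zpow_mul', zpow_natCast, zpow_ofNat, h4]
  ring

lemma Nv_eq (m : ℕ) (y : ℝ) : Nv m y =
    (8 * (2 ^ m) ^ 6 - 18 * (2 ^ m) ^ 2 * (3 ^ m) ^ 2 - 2 * (m + 1) * (2 ^ m) ^ 5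
      + 28 / 3 * (2 ^ m) ^ 3 * 3 ^ m + (3 / 2 * m + 3) * 2 ^ m * (3 ^ m) ^ 2
      + (1 / 8 * m ^ 2 + 1 / 4 * m + 193 / 40) * (2 ^ m) ^ 4
      - (7 / 12 * m + 217 / 12) * (2 ^ m) ^ 2 * 3 ^ m + 12 * (3 ^ m) ^ 2
      + (m + 79 / 8) * (2 ^ m) ^ 3 - 107 / 10 * 2 ^ m * 3 ^ m
      - (1 / 16 * m ^ 2 + 1 / 8 * m - 149 / 48) * (2 ^ m) ^ 2 + 8 / 3 * 3 ^ m - 4 * 2 ^ m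
      - m + 1 / 12)
    + (8 * (2 ^ m) ^ 4 - 12 * (3 ^ m) ^ 2 - (m + 1) * (2 ^ m) ^ 3 + 14 / 3 * 2 ^ m * 3 ^ m
      - 4 * (2 ^ m) ^ 2 + (m / 2 + 3 / 2) * 2 ^ m + 2 * m + 3) * y
    + (2 * (2 ^ m) ^ 2 - 2 * m - 2) * y ^ 2 := by
  have h6 : (6 : ℝ) ^ m = 2 ^ m * 3 ^ m := by rw [← mul_pow]; norm_num
  have h2' : (2 : ℝ) ≠ 0 := two_ne_zero
  have h3' : (3 : ℝ) ≠ 0 := three_ne_zero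
  have h6' : (6 : ℝ) ≠ 0 := by norm_num
  simp only [Nv, zpow_add₀ h2', zpow_add₀ h3', zpow_add₀ h6', zpow_sub₀ h2', zpow_sub₀ h3',
    zpow_mul', zpow_natCast, zpow_ofNat, h6]
  ring

/-! ### Nonnegativity of `D - x N` -/

/-- Elementary comparisons of `m`, `2 ^ m` and `3 ^ m`, with constants valid from `m = 12` on. -/
lemma growth (m : ℕ) (hm : 12 ≤ m) :
    341 * (m : ℝ) ≤ 2 ^ m ∧ 129 * (2 : ℝ) ^ m ≤ 3 ^ m ∧ 80 * m * ((3 : ℝ) ^ m) ^ 2 ≤ (2 ^ m) ^ 4 ∧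
      4 * ((2 : ℝ) ^ m) ^ 3 ≤ (3 ^ m) ^ 2 ∧ (m : ℝ) ^ 2 ≤ 2 ^ m := by
  induction m, hm using Nat.le_induction with
  | base => norm_num
  | succ m hm ih =>
    obtain ⟨h1, h2, h3, h4, h5⟩ := ih
    have hm' : (12 : ℝ) ≤ m := by exact_mod_cast hm
    have hu : (0 : ℝ) < 2 ^ m := by positivity
    have hw : (0 : ℝ) < (3 ^ m) ^ 2 := by positivity
    push_cast
    simp only [pow_succ (2 : ℝ) m, pow_succ (3 : ℝ) m]
    refine ⟨by linarith, by linarith, ?_, ?_, by nlinarith⟩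
    · have : (m : ℝ) * (3 ^ m) ^ 2 * 7 ≥ 9 * (3 ^ m) ^ 2 := by nlinarith
      nlinarith
    · have : (0 : ℝ) < (2 ^ m) ^ 3 := by positivity
      nlinarith

set_option maxHeartbeats 2000000 in
/-- The test point is `x = (1 + e) / (2 u²)` with `u = 2 ^ m`, `w = 3 ^ m`, `e = a + 9/4 a²`,
`a = (3/4) ^ (2 m + 1)`. Writing `C`, `B`, `L` for the coefficients of `D - x N` as a quadratic in
`y`, this shows `C ≥ a w²`, `|B| ≤ 7 w² / u²` and `L ≥ 22`, which makes the discriminant negative. -/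
lemma large_aux {u w s a x y : ℝ} (hs : 12 ≤ s) (hus : 341 * s ≤ u) (hwu : 129 * u ≤ w)
    (h3 : 80 * s * w ^ 2 ≤ u ^ 4) (h4 : 4 * u ^ 3 ≤ w ^ 2)
    (hsu : s ^ 2 ≤ u)
    (ha : a * u ^ 4 = 3 / 4 * w ^ 2) (hx : 2 * u ^ 2 * x = 1 + (a + 9 / 4 * a ^ 2)) :
    0 ≤ ((4 * u ^ 4 - 6 * w ^ 2 - (s + 1) * u ^ 3 + 14 / 3 * u * w
          + (1 / 16 * s ^ 2 + 1 / 8 * s - 149 / 48) * u ^ 2 - 8 / 3 * w + 4 * u + s - 1 / 12)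
        + (4 * u ^ 2 - (s / 2 + 3 / 2) * u - 2 * s - 3) * y + 2 * s * y ^ 2)
      - x * ((8 * u ^ 6 - 18 * u ^ 2 * w ^ 2 - 2 * (s + 1) * u ^ 5
          + 28 / 3 * u ^ 3 * w + (3 / 2 * s + 3) * u * w ^ 2
          + (1 / 8 * s ^ 2 + 1 / 4 * s + 193 / 40) * u ^ 4
          - (7 / 12 * s + 217 / 12) * u ^ 2 * w + 12 * w ^ 2
          + (s + 79 / 8) * u ^ 3 - 107 / 10 * u * w
          - (1 / 16 * s ^ 2 + 1 / 8 * s - 149 / 48) * u ^ 2 + 8 / 3 * w - 4 * u - s + 1 / 12)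
        + (8 * u ^ 4 - 12 * w ^ 2 - (s + 1) * u ^ 3 + 14 / 3 * u * w
          - 4 * u ^ 2 + (s / 2 + 3 / 2) * u + 2 * s + 3) * y
        + (2 * u ^ 2 - 2 * s - 2) * y ^ 2) := by
  have hu : 4092 ≤ u := by linarith
  have hu0 : 0 < u := by linarith
  have hw0 : 0 < w := by linarith
  have hu4 : 0 < u ^ 4 := by positivity
  have ha0 : 0 < a := by
    by_contra hc
    push Not at hc
    have : a * u ^ 4 ≤ 0 := mul_nonpos_of_nonpos_of_nonneg hc hu4.le
    have : 0 < w ^ 2 := by positivity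
    linarith
  have hsa : s * a ≤ 1 / 100 := by
    refine le_of_mul_le_mul_right ?_ hu4
    have : s * a * u ^ 4 = 3 / 4 * (s * w ^ 2) := by rw [mul_assoc, ha]; ring
    rw [this]
    linarith
  have ha1 : a ≤ 1 / 1200 := by nlinarith
  set e := a + 9 / 4 * a ^ 2 with he
  have hea : a ≤ e := by rw [he]; nlinarith
  have he1 : e ≤ 101 / 100 * a := by rw [he]; nlinarith
  have hx0 : 0 < x := by
    by_contra hc
    push Not at hc
    have : 2 * u ^ 2 * x ≤ 0 := mul_nonpos_of_nonneg_of_nonpos (by positivity) hc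
    linarith
  -- `p = w² / u²`; the bound `C ≥ a w²` then reads `C ≥ 3/4 p²`.
  obtain ⟨p, hp⟩ : ∃ p, p * u ^ 2 = w ^ 2 := ⟨w ^ 2 / u ^ 2, by field_simp⟩
  have hp0 : 0 < p := by
    by_contra hc
    push Not at hc
    have : p * u ^ 2 ≤ 0 := mul_nonpos_of_nonpos_of_nonneg hc (by positivity)
    have : 0 < w ^ 2 := by positivity
    linarith
  have hau : a * u ^ 2 = 3 / 4 * p := by
    have h : (a * u ^ 2) * u ^ 2 = (3 / 4 * p) * u ^ 2 := by linear_combination ha - 3 / 4 * hp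
    exact mul_right_cancel₀ (by positivity) h
  have hpu : 4 * u ≤ p := by
    refine le_of_mul_le_mul_right ?_ (by positivity : 0 < u ^ 2)
    rw [hp]; linarith
  have huw : 129 * (u * w) ≤ w ^ 2 := by nlinarith
  have hw2 : 129 ^ 2 * u ^ 2 ≤ w ^ 2 := by nlinarith
  have hwu4 : 960 * w ^ 2 ≤ u ^ 4 := by
    have := mul_le_mul_of_nonneg_right hs (sq_nonneg w)
    linarith
  have hs2 : s ^ 2 * u ^ 2 ≤ u ^ 3 := by
    have := mul_le_mul_of_nonneg_right hsu (sq_nonneg u)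
    linarith
  have hsu2 : 12 * (s * u ^ 2) ≤ s ^ 2 * u ^ 2 := by
    have := mul_le_mul_of_nonneg_right hs (by positivity : 0 ≤ s * u ^ 2)
    linarith
  have hu2 : 4092 * u ≤ u ^ 2 := by
    have := mul_le_mul_of_nonneg_right hu hu0.le
    linarith
  have hu3 : 4092 * u ^ 2 ≤ u ^ 3 := by
    have := mul_le_mul_of_nonneg_right hu (sq_nonneg u)
    linarith
  have hu34 : 4092 * u ^ 3 ≤ u ^ 4 := by
    have := mul_le_mul_of_nonneg_right hu (pow_pos hu0 3).le
    linarith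
  have hsu3 : 341 * (s * u ^ 3) ≤ u ^ 4 := by
    have := mul_le_mul_of_nonneg_right hus (pow_pos hu0 3).le
    linarith
  have hww : w ≤ w ^ 2 := by
    have := mul_le_mul_of_nonneg_right (by linarith : 1 ≤ w) hw0.le
    linarith
  set D0 := 4 * u ^ 4 - 6 * w ^ 2 - (s + 1) * u ^ 3 + 14 / 3 * u * w
    + (1 / 16 * s ^ 2 + 1 / 8 * s - 149 / 48) * u ^ 2 - 8 / 3 * w + 4 * u + s - 1 / 12 with hD0
  set D1 := 4 * u ^ 2 - (s / 2 + 3 / 2) * u - 2 * s - 3 with hD1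
  -- `G0`, `G1` are the lower-order parts `2 u² D_i - N_i` of the coefficients.
  obtain ⟨G0, hG0⟩ : ∃ G0, G0 = 6 * u ^ 2 * w ^ 2 - (3 / 2 * s + 3) * u * w ^ 2
    - 331 / 30 * u ^ 4 + (7 / 12 * s + 51 / 4) * u ^ 2 * w - 12 * w ^ 2 - (s + 15 / 8) * u ^ 3
    + 107 / 10 * u * w + (1 / 16 * s ^ 2 + 17 / 8 * s - 157 / 48) * u ^ 2 - 8 / 3 * w + 4 * u
    + s - 1 / 12 := ⟨_, rfl⟩
  obtain ⟨G1, hG1⟩ : ∃ G1, G1 = 12 * w ^ 2 - 2 * u ^ 3 - 14 / 3 * u * w - (4 * s + 2) * u ^ 2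
    - (s / 2 + 3 / 2) * u - 2 * s - 3 := ⟨_, rfl⟩
  have hD0le : D0 ≤ 4 * u ^ 4 - 59 / 10 * w ^ 2 - (s + 1) * u ^ 3 := by
    rw [hD0]; linarith
  have hG0ge : 2 * u ^ 2 * (3 * w ^ 2 - 3 / 4 * (s + 2) * (p * u) - 7 * u ^ 2) ≤ G0 := by
    have h1 : 2 * u ^ 2 * (3 * w ^ 2 - 3 / 4 * (s + 2) * (p * u) - 7 * u ^ 2) =
        6 * u ^ 2 * w ^ 2 - (3 / 2 * s + 3) * u * w ^ 2 - 14 * u ^ 4 := by rw [← hp]; ring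
    have h2 : 0 ≤ (7 / 12 * s + 51 / 4) * u ^ 2 * w := by positivity
    have h3 : 0 ≤ (1 / 16 * s ^ 2 + 17 / 8 * s) * u ^ 2 := by positivity
    have h4 : 0 ≤ 107 / 10 * u * w := by positivity
    rw [h1, hG0]
    linarith
  have hC : a * w ^ 2 ≤ -e * D0 + x * G0 := by
    have h1 : (1 + e) * (3 * w ^ 2 - 3 / 4 * (s + 2) * (p * u) - 7 * u ^ 2) ≤ x * G0 := by
      rw [← hx]
      have := mul_le_mul_of_nonneg_left hG0ge hx0.le
      linarith
    have h2 : e * D0 ≤ e * (4 * u ^ 4 - 59 / 10 * w ^ 2 - (s + 1) * u ^ 3) := by gcongr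
    have h3 : e * u ^ 4 = 3 / 4 * w ^ 2 * (1 + 9 / 4 * a) := by
      rw [he]; linear_combination (1 + 9 / 4 * a) * ha
    have h4 : e * u ^ 3 = 3 / 4 * (p * u) * (1 + 9 / 4 * a) := by
      rw [he]; linear_combination (u + 9 / 4 * a * u) * hau
    have h5 : e * (4 * u ^ 4 - 59 / 10 * w ^ 2 - (s + 1) * u ^ 3) =
        3 * w ^ 2 * (1 + 9 / 4 * a) - 59 / 10 * e * w ^ 2
          - (s + 1) * (3 / 4 * (p * u) * (1 + 9 / 4 * a)) := by
      linear_combination 4 * h3 - (s + 1) * h4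
    -- `w² / u ≤ a w² / 3` and `u² ≤ a w² / 12`
    have h6 : 3 * (p * u) ≤ a * w ^ 2 := by
      have : a * w ^ 2 = 3 / 4 * p * p := by rw [← hp]; linear_combination p * hau
      rw [this]; linarith [mul_le_mul_of_nonneg_right hpu hp0.le]
    have h7 : 12 * u ^ 2 ≤ a * w ^ 2 := by
      have : a * w ^ 2 = 3 / 4 * p * p := by rw [← hp]; linear_combination p * hau
      rw [this]; nlinarith only [hpu, hu0]
    have h8 : (s + 2) * e * (p * u) ≤ 2 / 100 * (p * u) := by
      have : (s + 2) * e ≤ 2 / 100 := by nlinarith only [hs, hea, he1, ha0, ha1, hsa]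
      exact mul_le_mul_of_nonneg_right this (by positivity)
    have h9 : e * u ^ 2 ≤ 1 / 100 * u ^ 2 := by
      have : e ≤ 1 / 100 := by linarith
      exact mul_le_mul_of_nonneg_right this (sq_nonneg u)
    have h10 : a * w ^ 2 ≤ e * w ^ 2 := by gcongr
    have h11 : 0 ≤ (s + 1) * (3 / 4 * (p * u) * (9 / 4 * a)) := by positivity
    linarith
  have hD10 : 0 ≤ D1 := by rw [hD1]; nlinarith only [hu2, hus, hs, hu0, hu]
  have hD14 : D1 ≤ 4 * u ^ 2 := by
    have : 0 ≤ (s / 2 + 3 / 2) * u := by positivity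
    rw [hD1]; linarith
  have hG10 : 0 ≤ G1 := by
    have := mul_le_mul_of_nonneg_right hus hu0.le
    rw [hG1]; linarith
  have hG112 : G1 ≤ 12 * w ^ 2 := by
    have h1 : 0 ≤ (s / 2 + 3 / 2) * u := by positivity
    have h2 : 0 ≤ (4 * s + 2) * u ^ 2 := by positivity
    have h3 : 0 ≤ 14 / 3 * u * w := by positivity
    have h4 : 0 < u ^ 3 := by positivity
    rw [hG1]; linarith
  have hBle : -e * D1 + x * G1 ≤ 7 * p := by
    have h1 : x * G1 ≤ x * (12 * w ^ 2) := by gcongr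
    have h2 : x * (12 * w ^ 2) = 6 * p * (1 + e) := by rw [← hp]; linear_combination 6 * p * hx
    have h3 : 0 ≤ e * D1 := mul_nonneg (by linarith) hD10
    nlinarith only [h1, h2, h3, hp0, he1, ha1]
  have hBge : -(7 * p) ≤ -e * D1 + x * G1 := by
    have h1 : e * D1 ≤ e * (4 * u ^ 2) := by gcongr
    have h2 : e * (4 * u ^ 2) = 3 * p * (1 + 9 / 4 * a) := by
      rw [he]; linear_combination (4 + 9 * a) * hau
    have h3 : 0 ≤ x * G1 := by positivity
    nlinarith only [h1, h2, h3, hp0, ha1]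
  have hL : 22 ≤ 2 * s - x * (2 * u ^ 2 - 2 * s - 2) := by
    have : 0 ≤ x * (2 * s + 2) := by positivity
    linarith
  have haw : a * w ^ 2 = 3 / 4 * p * p := by rw [← hp]; linear_combination p * hau
  set L := 2 * s - x * (2 * u ^ 2 - 2 * s - 2) with hLdef
  set B := -e * D1 + x * G1 with hB
  set C := -e * D0 + x * G0 with hCdef
  have hquad : 0 ≤ L * y ^ 2 + B * y + C := by
    have hBB : B ^ 2 ≤ 49 * p ^ 2 := by nlinarith only [hBle, hBge]
    have h1 : 0 ≤ 22 * y ^ 2 + B * y + 3 / 4 * p * p := by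
      nlinarith only [sq_nonneg (44 * y + B), hBB, sq_nonneg p]
    have h2 := mul_le_mul_of_nonneg_right hL (sq_nonneg y)
    linarith
  have hfin : L * y ^ 2 + B * y + C = (D0 + D1 * y + 2 * s * y ^ 2)
      - x * ((8 * u ^ 6 - 18 * u ^ 2 * w ^ 2 - 2 * (s + 1) * u ^ 5
          + 28 / 3 * u ^ 3 * w + (3 / 2 * s + 3) * u * w ^ 2
          + (1 / 8 * s ^ 2 + 1 / 4 * s + 193 / 40) * u ^ 4
          - (7 / 12 * s + 217 / 12) * u ^ 2 * w + 12 * w ^ 2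
          + (s + 79 / 8) * u ^ 3 - 107 / 10 * u * w
          - (1 / 16 * s ^ 2 + 1 / 8 * s - 149 / 48) * u ^ 2 + 8 / 3 * w - 4 * u - s + 1 / 12)
        + (8 * u ^ 4 - 12 * w ^ 2 - (s + 1) * u ^ 3 + 14 / 3 * u * w
          - 4 * u ^ 2 + (s / 2 + 3 / 2) * u + 2 * s + 3) * y
        + (2 * u ^ 2 - 2 * s - 2) * y ^ 2) := by
    have he' : e = 2 * u ^ 2 * x - 1 := by linarith
    rw [hLdef, hB, hCdef, he', hG0, hG1, hD0, hD1]
    ring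
  rw [← hfin]
  exact hquad

/-! ### The bound -/

/-- Any `x` at which the truncated series is nonpositive and `D - x N ≥ 0` proves the bound. -/
lemma bound_of_test_point {m : ℕ} {y q : ℝ} (x : ℝ) (hN : 0 < Nv m y)
    (hmax : ∀ r : ℝ, (eulerianPoly (2 * m)).eval r = 0 → r ≤ q) (hx : 0 < x)
    (h43 : (4 : ℝ) ^ (2 * m + 1) * x ≤ 3 ^ (2 * m + 1))
    (hneg : 1 - 2 ^ (2 * m + 1) * x + 3 ^ (2 * m + 1) * x ^ 2 - 4 ^ (2 * m + 1) * x ^ 3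
      + 5 ^ (2 * m + 1) * x ^ 4 ≤ 0)
    (hDN : 0 ≤ Dv m y - x * Nv m y) : -(Dv m y / Nv m y) ≤ q := by
  have h1 : x ≤ Dv m y / Nv m y := by
    rw [le_div_iff₀ hN]
    linarith
  have h2 := neg_le_largest_root (2 * m) hx h43 hneg hmax
  linarith

/-- The range `12 ≤ m`, where the test point is `x = (1 + a + 9/4 a²) / 2 ^ (2 m + 1)` with
`a = (3/4) ^ (2 m + 1)`. -/
lemma bound_large {m : ℕ} {y q : ℝ} (hm : 12 ≤ m) (hN : 0 < Nv m y)
    (hmax : ∀ r : ℝ, (eulerianPoly (2 * m)).eval r = 0 → r ≤ q) :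
    -(Dv m y / Nv m y) ≤ q := by
  obtain ⟨h1, h2, h3, h4, h5⟩ := growth m hm
  have hs : (12 : ℝ) ≤ m := by exact_mod_cast hm
  have p2 : (2 : ℝ) ^ (2 * m + 1) = 2 * (2 ^ m) ^ 2 := by ring
  have p3 : (3 : ℝ) ^ (2 * m + 1) = 3 * (3 ^ m) ^ 2 := by ring
  have p4 : (4 : ℝ) ^ (2 * m + 1) = 4 * (2 ^ m) ^ 4 := by
    rw [pow_succ, pow_mul, ← pow_mul, ← pow_mul, show (4 : ℝ) = 2 ^ 2 by norm_num, ← pow_mul]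
    ring
  have p5 : (5 : ℝ) ^ (2 * m + 1) * 3 ^ (2 * m + 1) ≤ 4 ^ (2 * m + 1) * 4 ^ (2 * m + 1) := by
    rw [← mul_pow, ← mul_pow]
    exact pow_le_pow_left₀ (by norm_num) (by norm_num) _
  have hD := Dv_eq m y
  have hNe := Nv_eq m y
  have hu0 : (0 : ℝ) < 2 ^ m := by positivity
  have hw0 : (0 : ℝ) < 3 ^ m := by positivity
  set u : ℝ := 2 ^ m with hu
  set w : ℝ := 3 ^ m with hw
  obtain ⟨a, ha⟩ : ∃ a, a * u ^ 4 = 3 / 4 * w ^ 2 := ⟨3 / 4 * w ^ 2 / u ^ 4, by field_simp⟩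
  obtain ⟨x, hx⟩ : ∃ x, 2 * u ^ 2 * x = 1 + (a + 9 / 4 * a ^ 2) :=
    ⟨(1 + (a + 9 / 4 * a ^ 2)) / (2 * u ^ 2), by field_simp⟩
  have hu4 : 0 < u ^ 4 := by positivity
  have hw2 : 0 < w ^ 2 := by positivity
  have ha0 : 0 < a := pos_of_mul_pos_left (by rw [ha]; positivity) hu4.le
  have hx0 : 0 < x := by
    refine pos_of_mul_pos_right (a := 2 * u ^ 2) ?_ (by positivity)
    rw [hx]; positivity
  have ha1 : a ≤ 1 / 1200 := by
    refine le_of_mul_le_mul_right ?_ hu4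
    have := mul_le_mul_of_nonneg_right hs hw2.le
    rw [ha]; linarith
  have hx2 : 2 * u ^ 2 * x ≤ 2 := by rw [hx]; nlinarith only [ha0, ha1]
  have h43 : (4 : ℝ) ^ (2 * m + 1) * x ≤ 3 ^ (2 * m + 1) := by
    rw [p4, p3]
    have := mul_le_mul_of_nonneg_left hx2 (by positivity : 0 ≤ 2 * u ^ 2)
    -- `4 u² ≤ u³ ≤ w²`
    have hu12 : (4 : ℝ) ≤ u := by linarith
    have := mul_le_mul_of_nonneg_right hu12 (by positivity : 0 ≤ u ^ 2)
    linarith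
  refine bound_of_test_point x hN hmax hx0 h43 ?_ ?_
  · have h6 : (5 : ℝ) ^ (2 * m + 1) * x ≤ 4 ^ (2 * m + 1) := by
      refine le_of_mul_le_mul_right ?_ (by positivity : (0 : ℝ) < 4 ^ (2 * m + 1))
      calc (5 : ℝ) ^ (2 * m + 1) * x * 4 ^ (2 * m + 1)
          = 5 ^ (2 * m + 1) * (4 ^ (2 * m + 1) * x) := by ring
        _ ≤ 5 ^ (2 * m + 1) * 3 ^ (2 * m + 1) := by gcongr
        _ ≤ _ := p5
    have h7 := mul_le_mul_of_nonneg_right h6 (by positivity : 0 ≤ x ^ 3)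
    have h8 : 1 - 2 ^ (2 * m + 1) * x + 3 ^ (2 * m + 1) * x ^ 2 ≤ 0 := by
      rw [p2, p3]
      have h9 : 3 * w ^ 2 * x ^ 2 = a * (1 + (a + 9 / 4 * a ^ 2)) ^ 2 := by
        rw [← hx]; linear_combination -4 * x ^ 2 * ha
      rw [h9, hx]
      have h10 : (1 + (a + 9 / 4 * a ^ 2)) ^ 2 ≤ 1 + 9 / 4 * a := by
        have h11 : a ^ 2 ≤ 1 / 1200 * a := by nlinarith only [ha0, ha1]
        have h12 : a ^ 3 ≤ a ^ 2 := by nlinarith only [sq_nonneg a, ha1]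
        have h13 : a ^ 4 ≤ a ^ 2 := by nlinarith only [sq_nonneg a, ha1, ha0, h12]
        linarith
      have := mul_le_mul_of_nonneg_left h10 ha0.le
      linarith
    linarith
  · rw [hD, hNe]
    exact large_aux hs h1 h2 h3 h4 h5 ha hx

/-- The range `3 ≤ m ≤ 11`: for each `m` a rational number slightly above the modulus of the largest
root serves as test point, and `D - x N` is a combination of `(y + c) ^ 2`, `y ^ 2` and `1` with
nonnegative coefficients. -/
lemma bound_small {m : ℕ} {y q : ℝ} (hm : 3 ≤ m) (hm' : m < 12) (hN : 0 < Nv m y)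
    (hmax : ∀ r : ℝ, (eulerianPoly (2 * m)).eval r = 0 → r ≤ q) :
    -(Dv m y / Nv m y) ≤ q := by
  have hy := sq_nonneg y
  interval_cases m
  · refine bound_of_test_point (293 / 250 / 2 ^ 7) hN hmax ?_ ?_ ?_ ?_ <;>
      norm_num [Dv_eq, Nv_eq]
    linarith [sq_nonneg (y + 2)]
  · refine bound_of_test_point (1087 / 1000 / 2 ^ 9) hN hmax ?_ ?_ ?_ ?_ <;>
      norm_num [Dv_eq, Nv_eq]
    linarith [sq_nonneg (y + 5)]
  · refine bound_of_test_point (523 / 500 / 2 ^ 11) hN hmax ?_ ?_ ?_ ?_ <;>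
      norm_num [Dv_eq, Nv_eq]
    linarith [sq_nonneg (y + 10)]
  · refine bound_of_test_point (41 / 40 / 2 ^ 13) hN hmax ?_ ?_ ?_ ?_ <;>
      norm_num [Dv_eq, Nv_eq]
    linarith [sq_nonneg (y + 20)]
  · refine bound_of_test_point (101371 / 100000 / 2 ^ 15) hN hmax ?_ ?_ ?_ ?_ <;>
      norm_num [Dv_eq, Nv_eq]
    linarith [sq_nonneg (y + 50)]
  · refine bound_of_test_point (100763 / 100000 / 2 ^ 17) hN hmax ?_ ?_ ?_ ?_ <;>
      norm_num [Dv_eq, Nv_eq]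
    linarith [sq_nonneg (y + 100)]
  · refine bound_of_test_point (100427 / 100000 / 2 ^ 19) hN hmax ?_ ?_ ?_ ?_ <;>
      norm_num [Dv_eq, Nv_eq]
    linarith [sq_nonneg (y + 200)]
  · refine bound_of_test_point (100239 / 100000 / 2 ^ 21) hN hmax ?_ ?_ ?_ ?_ <;>
      norm_num [Dv_eq, Nv_eq]
    linarith [sq_nonneg (y + 500)]
  · refine bound_of_test_point (500671 / 500000 / 2 ^ 23) hN hmax ?_ ?_ ?_ ?_ <;>
      norm_num [Dv_eq, Nv_eq]
    linarith [sq_nonneg (y + 1000)]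

/-- for every integer `m ≥ 3` (with `n = 2m`) and every `y ∈ ℝ` with
`N(m,y) > 0`, the largest real root `q` of the Eulerian polynomial `A_{2m}` satisfies
`q ≥ −D(m,y)/N(m,y)`. -/
theorem stmt17 (m : ℕ) (hm : 3 ≤ m) (y : ℝ) (hN : 0 < Nv m y)
    (q : ℝ) (hq : (eulerianPoly (2 * m)).eval q = 0)
    (hmax : ∀ r : ℝ, (eulerianPoly (2 * m)).eval r = 0 → r ≤ q) :
    -(Dv m y / Nv m y) ≤ q := by
  rcases Nat.lt_or_ge m 12 with h | h
  · exact bound_small hm h hN hmax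
  · exact bound_large h hN hmax
end
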